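/- arXiv:1403.6737 — 3 statements merged into one kernel-verified Lean document; each statement's English description precedes it below -/
import Mathlib

section
/- Let X be a K-convex Banach space. Then there exist a real number ρ with 0 < ρ < 2 and an integer n ≥ 1 such that for every collection P_1, …, P_n of mutually commuting norm-one projections on X (i.e., bounded linear operators with P_k ∘ P_k = P_k, ‖P_k‖ = 1, and P_j ∘ P_k = P_k ∘ P_j for all j, k), one has ‖∏_{k=1}^n (Id_X − P_k)‖ ≤ ρ^n in operator norm. -/
open Finset

/-- The `k`-th Rademacher function on the discrete cube `{-1,1}ⁿ`, modelled on `Fin n → Bool`. -/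
def rademacher {n : ℕ} (k : Fin n) (σ : Fin n → Bool) : ℝ := if σ k then 1 else -1

/-- A Banach space `X` is K-convex if the Rademacher projections are uniformly bounded:
there is a constant `C` such that for every `n ≥ 1` and every `f : {-1,1}ⁿ → X`,
`(𝔼‖∑ₖ εₖ · 𝔼[εₖ f]‖²)^{1/2} ≤ C (𝔼‖f‖²)^{1/2}`, where `𝔼` denotes the average over the
uniform probability measure on the discrete cube. -/
def KConvex (X : Type*) [NormedAddCommGroup X] [NormedSpace ℝ X] : Prop :=
  ∃ C : ℝ, ∀ n : ℕ, 1 ≤ n → ∀ f : (Fin n → Bool) → X,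
    Real.sqrt ((2 ^ n : ℝ)⁻¹ * ∑ σ : Fin n → Bool,
        ‖∑ k : Fin n, rademacher k σ •
          ((2 ^ n : ℝ)⁻¹ • ∑ τ : Fin n → Bool, rademacher k τ • f τ)‖ ^ 2)
      ≤ C * Real.sqrt ((2 ^ n : ℝ)⁻¹ * ∑ σ : Fin n → Bool, ‖f σ‖ ^ 2)

section moments

/-- Splitting a sum over the discrete cube along the first coordinate. -/
lemma cube_sum_succ {n : ℕ} (F : (Fin (n + 1) → Bool) → ℝ) :
    ∑ τ, F τ = ∑ τ : Fin n → Bool, (F (Fin.cons true τ) + F (Fin.cons false τ)) := by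
  rw [← (Fin.consEquiv (fun _ : Fin (n + 1) => Bool)).sum_comp, Fintype.sum_prod_type]
  simp only [Fintype.sum_bool, Finset.sum_add_distrib]
  rfl

lemma rad_sum_cons {n : ℕ} (a : Fin (n + 1) → ℝ) (b : Bool) (τ : Fin n → Bool) :
    ∑ k, a k * rademacher k (Fin.cons b τ : Fin (n + 1) → Bool) =
      (if b then 1 else -1) * a 0 + ∑ k : Fin n, a k.succ * rademacher k τ := by
  rw [Fin.sum_univ_succ]
  simp [rademacher, mul_comm]

lemma second_moment (n : ℕ) : ∀ a : Fin n → ℝ, (∀ k, a k ^ 2 = 1) →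
    ∑ τ : Fin n → Bool, (∑ k, a k * rademacher k τ) ^ 2 = 2 ^ n * n := by
  induction n with
  | zero => intro a _; simp
  | succ n ih =>
    intro a ha
    have h := ih (fun k => a k.succ) (fun k => ha _)
    rw [cube_sum_succ]
    have h0 := ha 0
    have : ∀ τ : Fin n → Bool,
        (∑ k, a k * rademacher k (Fin.cons true τ : Fin (n + 1) → Bool)) ^ 2 +
        (∑ k, a k * rademacher k (Fin.cons false τ : Fin (n + 1) → Bool)) ^ 2 =
        2 * (∑ k : Fin n, a k.succ * rademacher k τ) ^ 2 + 2 := by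
      intro τ
      rw [rad_sum_cons, rad_sum_cons]
      simp only [if_true, Bool.false_eq_true, if_false]
      linear_combination 2 * h0
    simp only [this, Finset.sum_add_distrib, ← Finset.mul_sum, h]
    simp
    ring

lemma fourth_moment (n : ℕ) : ∀ a : Fin n → ℝ, (∀ k, a k ^ 2 = 1) →
    ∑ τ : Fin n → Bool, (∑ k, a k * rademacher k τ) ^ 4 = 2 ^ n * (3 * n ^ 2 - 2 * n) := by
  induction n with
  | zero => intro a _; simp
  | succ n ih =>
    intro a ha
    have h := ih (fun k => a k.succ) (fun k => ha _)
    have h2 := second_moment n (fun k => a k.succ) (fun k => ha _)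
    rw [cube_sum_succ]
    have h0 := ha 0
    have : ∀ τ : Fin n → Bool,
        (∑ k, a k * rademacher k (Fin.cons true τ : Fin (n + 1) → Bool)) ^ 4 +
        (∑ k, a k * rademacher k (Fin.cons false τ : Fin (n + 1) → Bool)) ^ 4 =
        2 * (∑ k : Fin n, a k.succ * rademacher k τ) ^ 4 +
          12 * (∑ k : Fin n, a k.succ * rademacher k τ) ^ 2 + 2 := by
      intro τ
      rw [rad_sum_cons, rad_sum_cons]
      simp only [if_true, Bool.false_eq_true, if_false]
      generalize ∑ k : Fin n, a k.succ * rademacher k τ = s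
      linear_combination (12 * s ^ 2 + 2 * (a 0 ^ 2 + 1)) * h0
    simp only [this, Finset.sum_add_distrib, ← Finset.mul_sum, h, h2]
    simp
    ring

/-- A Khinchin-type lower bound for the first moment. -/
lemma first_moment (n : ℕ) (a : Fin n → ℝ) (ha : ∀ k, a k ^ 2 = 1) (hn : 1 ≤ n) :
    2 ^ n * (5 / 9 * Real.sqrt n) ≤ ∑ τ : Fin n → Bool, |∑ k, a k * rademacher k τ| := by
  set c := Real.sqrt n with hc
  have hn' : (0 : ℝ) < n := by exact_mod_cast hn
  have hcpos : 0 < c := Real.sqrt_pos.mpr hn'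
  have hcc : c ^ 2 = n := Real.sq_sqrt hn'.le
  have key : ∀ s : ℝ, 27 * c ^ 2 * s ^ 2 - 4 * s ^ 4 ≤ 27 * c ^ 3 * |s| := by
    intro s
    have h1 : s ^ 2 = |s| ^ 2 := (sq_abs s).symm
    have h2 : s ^ 4 = |s| ^ 4 := by
      rw [show s ^ 4 = (s ^ 2) ^ 2 by ring, h1]; ring
    rw [h1, h2]
    have ht := abs_nonneg s
    generalize |s| = t at ht
    have : 0 ≤ t * ((2 * t - 3 * c) ^ 2 * (t + 3 * c)) := by positivity
    nlinarith
  have hs := Finset.sum_le_sum (fun (τ : Fin n → Bool) (_ : τ ∈ univ) =>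
    key (∑ k, a k * rademacher k τ))
  rw [Finset.sum_sub_distrib, ← Finset.mul_sum, ← Finset.mul_sum, ← Finset.mul_sum,
    second_moment n a ha, fourth_moment n a ha, ← hcc] at hs
  set M := ∑ τ : Fin n → Bool, |∑ k, a k * rademacher k τ|
  have h3 : c ^ 3 * (2 ^ n * (5 / 9 * c)) ≤ c ^ 3 * M := by
    have : (0 : ℝ) ≤ 2 ^ n * c ^ 2 := by positivity
    nlinarith
  exact le_of_mul_le_mul_left h3 (by positivity)

end moments

section operators

/-- The monomials in the expansion of a product of `1 - P k`. -/
def projMonomial {R : Type*} [Ring R] {n : ℕ} (P : Fin n → R) (B : Fin n → Bool) : R :=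
  (List.ofFn (fun k => if B k then -P k else 1)).prod

lemma mono_succ {R : Type*} [Ring R] {n : ℕ} (P : Fin (n + 1) → R) (B : Fin (n + 1) → Bool) :
    projMonomial P B = (if B 0 then -P 0 else 1) * projMonomial (fun k => P k.succ) (fun k => B k.succ) := by
  simp [projMonomial, List.ofFn_succ]

lemma mono_mul {R : Type*} [Ring R] (n : ℕ) : ∀ (P : Fin n → R) (_ : ∀ k, P k * P k = P k)
    (_ : ∀ j k, P j * P k = P k * P j) (B : Fin n → Bool) (j : Fin n),
    projMonomial P B * P j = (if B j then 1 else -1) * projMonomial P (Function.update B j true) := by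
  induction n with
  | zero => intro P _ _ B j; exact j.elim0
  | succ n ih =>
    intro P hi hc B j
    rw [mono_succ, mono_succ]
    refine Fin.cases ?_ (fun i => ?_) j
    · have hcomm : projMonomial (fun k => P k.succ) (fun k => B k.succ) * P 0 =
          P 0 * projMonomial (fun k => P k.succ) (fun k => B k.succ) := by
        refine (Commute.list_prod_right _ _ ?_).eq.symm
        intro y hy
        rw [List.mem_ofFn] at hy
        obtain ⟨k, rfl⟩ := hy
        dsimp only
        split_ifs
        · exact Commute.neg_right (hc _ _)
        · exact Commute.one_right _
      rw [mul_assoc, hcomm, ← mul_assoc]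
      have hu : (fun k : Fin n => Function.update B 0 true k.succ) = fun k => B k.succ := by
        funext k; simp
      rw [hu]
      cases B 0 <;> simp [hi]
    · have hu : (fun k : Fin n => Function.update B i.succ true k.succ) =
          Function.update (fun k => B k.succ) i true := by
        funext k
        by_cases h : k = i
        · subst h; simp
        · simp [h]
      have h := ih (fun k => P k.succ) (fun k => hi _) (fun _ _ => hc _ _) (fun k => B k.succ) i
      rw [mul_assoc, h, hu]
      have h0 : Function.update B i.succ true 0 = B 0 := by
        rw [Function.update_of_ne (Fin.succ_ne_zero i).symm]
      rw [h0]
      cases B i.succ <;> cases B 0 <;> simp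

variable {X : Type*} [NormedAddCommGroup X] [NormedSpace ℝ X]

lemma prod_bounds (n : ℕ) : ∀ (P : Fin n → X →L[ℝ] X) (_ : ∀ k, ‖P k‖ ≤ 1) (B : Fin n → Bool),
    ‖projMonomial P B‖ ≤ 1 ∧ ‖(List.ofFn (fun k => 1 - P k)).prod‖ ≤ 2 ^ n ∧
      ‖(List.ofFn (fun k => 1 - P k)).prod - projMonomial P B‖ ≤ 2 ^ n - 1 := by
  have hone : ‖(1 : X →L[ℝ] X)‖ ≤ 1 := ContinuousLinearMap.norm_id_le
  induction n with
  | zero => intro P _ B; simpa [projMonomial] using hone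
  | succ n ih =>
    intro P hP B
    obtain ⟨h1, h2, h3⟩ := ih (fun k => P k.succ) (fun k => hP _) (fun k => B k.succ)
    rw [mono_succ, List.ofFn_succ, List.prod_cons]
    obtain ⟨c, c', hc, hc', hcd, hcc⟩ : ∃ c c' : X →L[ℝ] X, ‖c‖ ≤ 1 ∧ ‖c'‖ ≤ 1 ∧
        (if B 0 then -P 0 else 1) = c ∧ 1 - P 0 = c + c' := by
      cases hB : B 0
      · exact ⟨1, -P 0, hone, by simpa using hP 0, by simp, by abel⟩
      · exact ⟨-P 0, 1, by simpa using hP 0, hone, by simp, by abel⟩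
    rw [hcd, hcc]
    set S := (List.ofFn (fun k : Fin n => 1 - P k.succ)).prod
    set T := projMonomial (fun k => P k.succ) (fun k => B k.succ)
    have mulb : ∀ (u v : X →L[ℝ] X) (r : ℝ), ‖u‖ ≤ 1 → ‖v‖ ≤ r → ‖u * v‖ ≤ r := by
      intro u v r hu hv
      calc ‖u * v‖ ≤ ‖u‖ * ‖v‖ := norm_mul_le _ _
        _ ≤ 1 * ‖v‖ := by gcongr
        _ ≤ r := by simpa using hv
    refine ⟨mulb _ _ _ hc h1, ?_, ?_⟩
    · rw [add_mul]
      refine (norm_add_le _ _).trans ?_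
      have := mulb c S _ hc h2
      have := mulb c' S _ hc' h2
      rw [pow_succ]; linarith
    · rw [show (c + c') * S - c * T = c * (S - T) + c' * S by noncomm_ring]
      refine (norm_add_le _ _).trans ?_
      have := mulb c (S - T) _ hc h3
      have := mulb c' S _ hc' h2
      rw [pow_succ]; linarith

/-- If the product is almost of maximal norm, `X` contains a good copy of `ℓ₁ⁿ`. -/
lemma exists_l1 (n : ℕ) (P : Fin n → X →L[ℝ] X)
    (hi : ∀ k, P k * P k = P k) (hP : ∀ k, ‖P k‖ ≤ 1) (hc : ∀ j k, P j * P k = P k * P j)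
    (hbig : 2 ^ n - 1 / 2 < ‖(List.ofFn (fun k => 1 - P k)).prod‖) :
    ∃ v : Fin n → X, (∀ j, ‖v j‖ ≤ 1) ∧
      ∀ b : Fin n → ℝ, (∑ j, |b j|) / 2 ≤ ‖∑ j, b j • v j‖ := by
  obtain ⟨x, hx, hSx⟩ := ContinuousLinearMap.exists_lt_apply_of_lt_opNorm _ hbig
  obtain ⟨ξ, hξ, hξx⟩ := exists_dual_vector'' ℝ ((List.ofFn (fun k => 1 - P k)).prod x)
  simp only [RCLike.ofReal_real_eq_id, id_eq] at hξx
  have opb : ∀ (u : X →L[ℝ] X) (r : ℝ) (y : X), ‖u‖ ≤ r → ‖y‖ ≤ 1 → ‖u y‖ ≤ r := by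
    intro u r y hu hy
    have h0 : 0 ≤ r := (norm_nonneg _).trans hu
    calc ‖u y‖ ≤ ‖u‖ * ‖y‖ := u.le_opNorm y
      _ ≤ r * 1 := by gcongr
      _ = r := mul_one r
  have ξb : ∀ y : X, ξ y ≤ ‖y‖ := by
    intro y
    calc ξ y ≤ ‖ξ y‖ := le_abs_self _
      _ ≤ ‖ξ‖ * ‖y‖ := ξ.le_opNorm y
      _ ≤ 1 * ‖y‖ := by gcongr
      _ = ‖y‖ := one_mul _
  have hT : ∀ B, 1 / 2 ≤ ξ (projMonomial P B x) := by
    intro B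
    obtain ⟨-, -, h3⟩ := prod_bounds n P hP B
    have h4 := (ξb _).trans (opb _ _ x h3 hx.le)
    rw [sub_apply, map_sub] at h4
    linarith
  refine ⟨fun j => P j x, fun j => opb _ _ _ (hP j) hx.le, fun b => ?_⟩
  set B : Fin n → Bool := fun j => decide (0 ≤ b j) with hB
  have h1 : ∀ j, |b j| / 2 ≤ b j * ξ (projMonomial P B (P j x)) := by
    intro j
    have h := congrArg (fun u : X →L[ℝ] X => ξ (u x)) (mono_mul n P hi hc B j)
    have ht := hT (Function.update B j true)
    by_cases hb : 0 ≤ b j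
    · have hBj : B j = true := by simp [hB, hb]
      rw [hBj] at h
      simp only [if_true, one_mul, mul_apply_eq_comp] at h
      rw [h, abs_of_nonneg hb]
      nlinarith
    · have hBj : B j = false := by simp [hB, hb]
      rw [hBj] at h
      simp only [Bool.false_eq_true, if_false, neg_one_mul, mul_apply_eq_comp,
        neg_apply, map_neg] at h
      push Not at hb
      rw [h, abs_of_neg hb]
      nlinarith
  have h2 : ξ (projMonomial P B (∑ j, b j • P j x)) = ∑ j, b j * ξ (projMonomial P B (P j x)) := by
    simp [map_sum]
  calc (∑ j, |b j|) / 2 = ∑ j, |b j| / 2 := Finset.sum_div _ _ _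
    _ ≤ ∑ j, b j * ξ (projMonomial P B (P j x)) := Finset.sum_le_sum (fun j _ => h1 j)
    _ = ξ (projMonomial P B (∑ j, b j • P j x)) := h2.symm
    _ ≤ ‖projMonomial P B (∑ j, b j • P j x)‖ := ξb _
    _ ≤ ‖projMonomial P B‖ * ‖∑ j, b j • P j x‖ := ContinuousLinearMap.le_opNorm _ _
    _ ≤ 1 * ‖∑ j, b j • P j x‖ := by
        gcongr
        exact (prod_bounds n P hP B).1
    _ = _ := one_mul _

/-- A good copy of `ℓ₁` on the `N`-cube forces the K-convexity constant to be large. -/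
lemma kconvex_const (C : ℝ) (N : ℕ) (hN : 1 ≤ N) (f : (Fin N → Bool) → X)
    (hf : ∀ τ, ‖f τ‖ ≤ 1)
    (hl : ∀ b : (Fin N → Bool) → ℝ, (∑ τ, |b τ|) / 2 ≤ ‖∑ τ, b τ • f τ‖)
    (hC : Real.sqrt ((2 ^ N : ℝ)⁻¹ * ∑ σ : Fin N → Bool,
        ‖∑ k : Fin N, rademacher k σ •
          ((2 ^ N : ℝ)⁻¹ • ∑ τ : Fin N → Bool, rademacher k τ • f τ)‖ ^ 2)
      ≤ C * Real.sqrt ((2 ^ N : ℝ)⁻¹ * ∑ σ : Fin N → Bool, ‖f σ‖ ^ 2)) :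
    5 / 18 * Real.sqrt N ≤ |C| := by
  have h2 : (0 : ℝ) < 2 ^ N := by positivity
  have card : ∀ r : ℝ, (2 ^ N : ℝ)⁻¹ * ∑ _σ : Fin N → Bool, r = r := by
    intro r
    simp
  have hσ : ∀ σ : Fin N → Bool, 5 / 18 * Real.sqrt N ≤
      ‖∑ k : Fin N, rademacher k σ •
          ((2 ^ N : ℝ)⁻¹ • ∑ τ : Fin N → Bool, rademacher k τ • f τ)‖ := by
    intro σ
    have e : ∑ k : Fin N, rademacher k σ •
          ((2 ^ N : ℝ)⁻¹ • ∑ τ : Fin N → Bool, rademacher k τ • f τ) =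
        (2 ^ N : ℝ)⁻¹ • ∑ τ : Fin N → Bool,
          (∑ k, rademacher k σ * rademacher k τ) • f τ := by
      simp only [Finset.sum_smul, Finset.smul_sum, smul_smul]
      rw [Finset.sum_comm]
      refine Finset.sum_congr rfl fun τ _ => Finset.sum_congr rfl fun k _ => ?_
      congr 1; ring
    rw [e, norm_smul, Real.norm_of_nonneg (by positivity)]
    have h3 := hl (fun τ => ∑ k, rademacher k σ * rademacher k τ)
    have h4 := first_moment N (fun k => rademacher k σ)
      (fun k => by unfold rademacher; split_ifs <;> norm_num) hN
    rw [inv_mul_eq_div, le_div_iff₀ h2]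
    linarith
  have hR : Real.sqrt ((2 ^ N : ℝ)⁻¹ * ∑ σ : Fin N → Bool, ‖f σ‖ ^ 2) ≤ 1 := by
    rw [Real.sqrt_le_one, ← card 1]
    gcongr with σ
    exact pow_le_one₀ (norm_nonneg _) (hf σ)
  have hL : 5 / 18 * Real.sqrt N ≤ Real.sqrt ((2 ^ N : ℝ)⁻¹ * ∑ σ : Fin N → Bool,
        ‖∑ k : Fin N, rademacher k σ •
          ((2 ^ N : ℝ)⁻¹ • ∑ τ : Fin N → Bool, rademacher k τ • f τ)‖ ^ 2) := by
    apply Real.le_sqrt_of_sq_le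
    rw [← card ((5 / 18 * Real.sqrt N) ^ 2)]
    gcongr with σ
    exact hσ σ
  refine hL.trans (hC.trans ?_)
  calc _ ≤ |C| * Real.sqrt ((2 ^ N : ℝ)⁻¹ * ∑ σ : Fin N → Bool, ‖f σ‖ ^ 2) := by
        gcongr
        exact le_abs_self C
    _ ≤ |C| * 1 := by gcongr
    _ = |C| := mul_one _

end operators

theorem kconvex_projections {X : Type*} [NormedAddCommGroup X] [NormedSpace ℝ X]
    (hX : KConvex X) :
    ∃ ρ : ℝ, 0 < ρ ∧ ρ < 2 ∧ ∃ n : ℕ, 1 ≤ n ∧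
      ∀ P : Fin n → X →L[ℝ] X,
        (∀ k, P k ∘L P k = P k) →
        (∀ k, ‖P k‖ = 1) →
        (∀ j k, P j ∘L P k = P k ∘L P j) →
        ‖(List.ofFn (fun k => 1 - P k)).prod‖ ≤ ρ ^ n := by
  obtain ⟨C, hC⟩ := hX
  obtain ⟨N, hN⟩ := exists_nat_gt (max 1 ((18 / 5 * |C|) ^ 2))
  have hN1 : 1 ≤ N := by
    have := (le_max_left _ _).trans_lt hN
    exact_mod_cast this.le
  have hNC : 18 / 5 * |C| < Real.sqrt N :=
    Real.lt_sqrt_of_sq_lt ((le_max_right _ _).trans_lt hN)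
  have hn1 : 1 ≤ 2 ^ N := Nat.one_le_two_pow
  obtain ⟨n, hn⟩ : ∃ n, n = 2 ^ N := ⟨_, rfl⟩
  rw [← hn] at hn1
  have hge : (1 : ℝ) ≤ 2 ^ n := one_le_pow₀ (by norm_num)
  have hpow : (((2 : ℝ) ^ n - 1 / 2) ^ ((n : ℝ)⁻¹)) ^ n = 2 ^ n - 1 / 2 :=
    Real.rpow_inv_natCast_pow (by linarith) (by omega)
  refine ⟨((2 : ℝ) ^ n - 1 / 2) ^ ((n : ℝ)⁻¹), Real.rpow_pos_of_pos (by linarith) _, ?_,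
    n, hn1, ?_⟩
  · refine lt_of_pow_lt_pow_left₀ n (by norm_num) ?_
    rw [hpow]; linarith
  · intro P hi hP hc
    rw [hpow]
    by_contra! hbig
    obtain ⟨v, hv, hl⟩ := exists_l1 n P hi (fun k => (hP k).le) hc hbig
    let e : (Fin N → Bool) ≃ Fin n := Fintype.equivFinOfCardEq (by simp [hn])
    have := kconvex_const C N hN1 (fun τ => v (e τ)) (fun τ => hv _) (fun b => by
      have h := hl (fun j => b (e.symm j))
      rw [← e.sum_comp, ← e.sum_comp] at h
      simpa using h) (hC N hN1 _)
    linarith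
end

section
/- A Banach space X is K-convex if and only if X does not contain ℓ¹_n's uniformly, that is, if and only if it is NOT the case that for every integer n ≥ 1 and every λ > 1 there exist vectors x_1, …, x_n ∈ X such that λ^{-1} ∑_{i=1}^n |a_i| ≤ ‖∑_{i=1}^n a_i x_i‖ ≤ ∑_{i=1}^n |a_i| for all real scalars a_1, …, a_n. -/
open Finset

/-- A Banach space contains `ℓ¹ₙ`'s uniformly if for every `n ≥ 1` and every `λ > 1` there are
vectors `x₁, …, xₙ` with `λ⁻¹ ∑ |aᵢ| ≤ ‖∑ aᵢ xᵢ‖ ≤ ∑ |aᵢ|` for all real scalars. -/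
def ContainsL1nUniformly (X : Type*) [NormedAddCommGroup X] [NormedSpace ℝ X] : Prop :=
  ∀ n : ℕ, 1 ≤ n → ∀ lam : ℝ, 1 < lam → ∃ x : Fin n → X, ∀ a : Fin n → ℝ,
    lam⁻¹ * (∑ i, |a i|) ≤ ‖∑ i, a i • x i‖ ∧ ‖∑ i, a i • x i‖ ≤ ∑ i, |a i|

set_option linter.unusedSectionVars false
universe u
section Abstract
open MeasureTheory
variable {ι : Type*} [Fintype ι] {𝒜 : Type*} [NormedRing 𝒜] [NormedAlgebra ℝ 𝒜]

lemma kc_mul (M : (ι → ℝ) →ₐ[ℝ] 𝒜) {φ ψ χ : ι → ℝ} {a b : ℝ} (h : ∀ i, χ i = φ i * ψ i)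
    (ha : ‖M φ‖ ≤ a) (hb : ‖M ψ‖ ≤ b) : ‖M χ‖ ≤ a * b := by
  have : χ = φ * ψ := funext h
  rw [this, map_mul]
  exact (norm_mul_le _ _).trans
    (mul_le_mul ha hb (norm_nonneg _) ((norm_nonneg _).trans ha))

lemma kc_add (M : (ι → ℝ) →ₐ[ℝ] 𝒜) {φ ψ χ : ι → ℝ} {a b : ℝ} (h : ∀ i, χ i = φ i + ψ i)
    (ha : ‖M φ‖ ≤ a) (hb : ‖M ψ‖ ≤ b) : ‖M χ‖ ≤ a + b := by
  have : χ = φ + ψ := funext h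
  rw [this, map_add]
  exact (norm_add_le _ _).trans (add_le_add ha hb)

lemma kc_smul (M : (ι → ℝ) →ₐ[ℝ] 𝒜) {φ χ : ι → ℝ} {a : ℝ} (c : ℝ) (h : ∀ i, χ i = c * φ i)
    (ha : ‖M φ‖ ≤ a) : ‖M χ‖ ≤ |c| * a := by
  have : χ = c • φ := funext h
  rw [this, map_smul, norm_smul, Real.norm_eq_abs]
  exact mul_le_mul_of_nonneg_left ha (abs_nonneg _)

lemma kc_one (M : (ι → ℝ) →ₐ[ℝ] 𝒜) (h1 : ‖(1 : 𝒜)‖ ≤ 1) : ‖M (fun _ => 1)‖ ≤ 1 := by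
  have : (fun _ => 1 : ι → ℝ) = 1 := rfl
  rw [this, map_one]; exact h1

lemma kc_pow (M : (ι → ℝ) →ₐ[ℝ] 𝒜) (h1 : ‖(1 : 𝒜)‖ ≤ 1) {φ : ι → ℝ} {a : ℝ}
    (ha : ‖M φ‖ ≤ a) (n : ℕ) : ‖M (fun i => φ i ^ n)‖ ≤ a ^ n := by
  induction n with
  | zero => simpa using kc_one M h1
  | succ n ih => rw [pow_succ]; exact kc_mul M (fun i => pow_succ _ _) ih ha

lemma kc_cont (M : (ι → ℝ) →ₐ[ℝ] 𝒜) : Continuous M :=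
  LinearMap.continuous_of_finiteDimensional M.toLinearMap

lemma kc_sum (M : (ι → ℝ) →ₐ[ℝ] 𝒜) {α : Type*} (s : Finset α) (φ : α → ι → ℝ) (a : α → ℝ)
    (ha : ∀ x ∈ s, ‖M (φ x)‖ ≤ a x) : ‖M (fun i => ∑ x ∈ s, φ x i)‖ ≤ ∑ x ∈ s, a x := by
  have : (fun i => ∑ x ∈ s, φ x i) = ∑ x ∈ s, φ x := by ext i; simp
  rw [this, map_sum]
  exact (norm_sum_le _ _).trans (Finset.sum_le_sum ha)

lemma kc_tendsto (M : (ι → ℝ) →ₐ[ℝ] 𝒜) (φ : ℕ → ι → ℝ) (ψ : ι → ℝ) (a : ℝ)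
    (h : ∀ i, Filter.Tendsto (fun n => φ n i) Filter.atTop (nhds (ψ i)))
    (ha : ∀ n, ‖M (φ n)‖ ≤ a) : ‖M ψ‖ ≤ a := by
  have h1 : Filter.Tendsto φ Filter.atTop (nhds ψ) := tendsto_pi_nhds.2 h
  exact le_of_tendsto' (((kc_cont M).norm.tendsto ψ).comp h1) ha

lemma kc_integral [CompleteSpace 𝒜] (M : (ι → ℝ) →ₐ[ℝ] 𝒜) {α : Type*} [MeasurableSpace α]
    (μ : Measure α) (F : α → ι → ℝ) (g : α → ℝ) (hF : ∀ i, Integrable (fun r => F r i) μ)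
    (hg : Integrable g μ) (hb : ∀ᵐ r ∂μ, ‖M (F r)‖ ≤ g r) :
    ‖M (fun i => ∫ r, F r i ∂μ)‖ ≤ ∫ r, g r ∂μ := by
  have hFi : Integrable F μ := Integrable.of_eval hF
  have e : (fun i => ∫ r, F r i ∂μ) = ∫ r, F r ∂μ := by
    ext i; rw [eval_integral hF]
  let L : (ι → ℝ) →L[ℝ] 𝒜 := LinearMap.toContinuousLinearMap M.toLinearMap
  have : M (∫ r, F r ∂μ) = ∫ r, M (F r) ∂μ := (L.integral_comp_comm hFi).symm
  rw [e, this]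
  exact norm_integral_le_of_norm_le hg hb

/-- inverse of `1+T` -/
lemma kc_inv (M : (ι → ℝ) →ₐ[ℝ] 𝒜) (h1 : ‖(1 : 𝒜)‖ ≤ 1) (u : ι → ℝ) (K : ℕ) (δ : ℝ)
    (hδ : 0 < δ) (hu0 : ∀ i, 0 ≤ u i) (hu : ‖M u‖ ≤ 1) (hK : ‖M (fun i => (1 - u i) ^ K)‖ ≤ 2 ^ K - δ) :
    ‖M (fun i => 1 / (1 + u i))‖ ≤ K * 2 ^ K / δ := by
  set ψ : ι → ℝ := fun i => 1 / (1 + u i) with hψ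
  have hD : ‖M (fun i => 1 - u i)‖ ≤ 2 := by
    have := kc_add M (χ := fun i => 1 - u i) (fun i => by ring) (kc_one M h1)
      (kc_smul M (-1) (fun i => rfl) hu)
    norm_num at this ⊢; exact this
  have hS : ‖M (fun i => ∑ j ∈ range K, 2 ^ j * (1 - u i) ^ (K - 1 - j))‖ ≤ K * 2 ^ K := by
    refine (kc_sum M (range K) (fun j i => 2 ^ j * (1 - u i) ^ (K - 1 - j)) (fun _ => 2 ^ K) ?_).trans
      (by simp)
    intro j hj
    have := kc_smul M (2 ^ j) (fun i => rfl) (kc_pow M h1 hD (K - 1 - j))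
    refine this.trans ?_
    rw [abs_of_pos (by positivity), ← pow_add]
    exact pow_le_pow_right₀ (by norm_num) (by have := mem_range.1 hj; omega)
  have hid : ∀ i, ψ i = (2 ^ K)⁻¹ * (∑ j ∈ range K, 2 ^ j * (1 - u i) ^ (K - 1 - j)
      + (1 - u i) ^ K * ψ i) := by
    intro i
    have h0 : (1 + u i) ≠ 0 := by have := hu0 i; positivity
    have := (Commute.all (2:ℝ) (1 - u i)).geom_sum₂_mul K
    rw [show (2:ℝ) - (1 - u i) = 1 + u i by ring] at this
    rw [eq_div_of_mul_eq h0 this]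
    simp only [hψ]
    field_simp
    ring
  have := kc_smul M ((2 ^ K)⁻¹) hid (kc_add M (fun i => rfl) hS (kc_mul M (fun i => rfl) hK le_rfl))
  rw [abs_of_pos (by positivity)] at this
  have h2 : (0:ℝ) < 2 ^ K := by positivity
  rw [le_div_iff₀ hδ]
  rw [inv_mul_eq_div, le_div_iff₀ h2] at this
  linarith

lemma kc_inv_r (M : (ι → ℝ) →ₐ[ℝ] 𝒜) (h1 : ‖(1 : 𝒜)‖ ≤ 1) (u : ι → ℝ) (B r : ℝ)
    (hB : 0 < B) (hu0 : ∀ i, 0 ≤ u i) (hu : ‖M u‖ ≤ 1) (hr0 : 0 ≤ r) (hr1 : r ≤ 1)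
    (hK : ‖M (fun i => 1 / (1 + u i))‖ ≤ B) :
    ‖M (fun i => 1 / (1 + r * u i))‖ ≤ 2 * B := by
  set ψ : ι → ℝ := fun i => 1 / (1 + r * u i) with hψ
  have hp := norm_nonneg (M ψ)
  rcases le_total ((1 - r) * B) (1 / 2) with h | h
  · have hid : ∀ i, ψ i = 1 / (1 + u i) + (1 / (1 + u i)) * ((1 - r) * (u i * ψ i)) := by
      intro i
      have h0 : (1 + u i) ≠ 0 := by have := hu0 i; positivity
      have h0 : (1 + r * u i) ≠ 0 := by have := hu0 i; positivity
      simp only [hψ]; field_simp; ring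
    have := kc_add M hid hK (kc_mul M (fun i => rfl) hK (kc_smul M (1 - r) (fun i => rfl)
      (kc_mul M (fun i => rfl) hu le_rfl)))
    rw [abs_of_nonneg (by linarith)] at this
    nlinarith
  · have hid : ∀ i, ψ i = 1 + (-r) * (u i * ψ i) := by
      intro i
      have h0 : (1 + r * u i) ≠ 0 := by have := hu0 i; positivity
      simp only [hψ]; field_simp; ring
    have := kc_add M hid (kc_one M h1) (kc_smul M (-r) (fun i => rfl)
      (kc_mul M (fun i => rfl) hu le_rfl))
    rw [abs_neg, abs_of_nonneg hr0] at this
    nlinarith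
end Abstract
section Scalar
open MeasureTheory Filter Set
open scoped FourierTransform

lemma kc_integrable_sq (y : ℝ) (hy : 0 < y) :
    IntegrableOn (fun s : ℝ => s ^ 2 * Real.exp (-(y * s))) (Ioi 0) := by
  have := integrableOn_rpow_mul_exp_neg_mul_rpow (p := 1) (s := 2) (b := y) (by norm_num)
    (by norm_num) hy
  refine this.congr_fun (fun s hs => ?_) measurableSet_Ioi
  simp

lemma kc_norm_exp (z : ℂ) (s : ℝ) : ‖Complex.exp (-(z * s))‖ = Real.exp (-(z.re * s)) := by
  rw [Complex.norm_exp]; simp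

lemma kc_laplace (z : ℂ) (hz : 0 < z.re) :
    ∫ s in Ioi (0:ℝ), (s:ℂ) ^ 2 * Complex.exp (-(z * s)) = 2 / z ^ 3 := by
  have hz0 : z ≠ 0 := by rintro rfl; simp at hz
  have hd : ∀ s ∈ Ici (0:ℝ), HasDerivAt
      (fun s : ℝ => -((s:ℂ) ^ 2 / z + 2 * s / z ^ 2 + 2 / z ^ 3) * Complex.exp (-(z * s)))
      ((s:ℂ) ^ 2 * Complex.exp (-(z * s))) s := by
    intro s _
    have h0 : HasDerivAt (fun s : ℝ => (s:ℂ)) 1 s := Complex.ofRealCLM.hasDerivAt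
    have h1 := ((((h0.pow 2).div_const z).add (((h0.const_mul 2).div_const (z^2)))).add_const
      (2 / z ^ 3)).neg.mul ((h0.const_mul z).neg.cexp)
    refine h1.congr_deriv ?_
    simp
    field_simp
    ring
  have hi : IntegrableOn (fun s : ℝ => (s:ℂ) ^ 2 * Complex.exp (-(z * s))) (Ioi 0) := by
    refine Integrable.mono' (kc_integrable_sq z.re hz) (by fun_prop) ?_
    refine ae_of_all _ fun s => ?_
    rw [norm_mul, kc_norm_exp]; simp
  have hlim : Tendsto
      (fun s : ℝ => -((s:ℂ) ^ 2 / z + 2 * s / z ^ 2 + 2 / z ^ 3) * Complex.exp (-(z * s)))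
      atTop (nhds 0) := by
    have key : ∀ n : ℕ, Tendsto (fun s : ℝ => (s:ℂ) ^ n * Complex.exp (-(z * s))) atTop (nhds 0) := by
      intro n
      rw [tendsto_zero_iff_norm_tendsto_zero]
      have h := (Real.tendsto_pow_mul_exp_neg_atTop_nhds_zero n).comp
        (tendsto_id.const_mul_atTop hz)
      have h2 := h.const_mul ((z.re ^ n)⁻¹)
      rw [mul_zero] at h2
      refine h2.congr' ?_
      filter_upwards [eventually_ge_atTop 0] with s hs
      rw [norm_mul, kc_norm_exp]
      simp only [Function.comp, id, norm_pow, Complex.norm_real, Real.norm_eq_abs, abs_of_nonneg hs]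
      rw [mul_pow]
      field_simp
    have := (((key 2).const_mul (-1 / z)).add ((key 1).const_mul (-2 / z ^ 2))).add
      ((key 0).const_mul (-2 / z ^ 3))
    simp only [mul_zero, add_zero] at this
    refine this.congr fun s => ?_
    ring
  rw [integral_Ioi_of_hasDerivAt_of_tendsto' hd hi hlim]
  simp

lemma kc_int_inv (c : ℝ) (hc : 0 < c) :
    Integrable (fun ξ : ℝ => 1 / (c ^ 2 + (2 * Real.pi * ξ) ^ 2)) ∧
    ∫ ξ : ℝ, 1 / (c ^ 2 + (2 * Real.pi * ξ) ^ 2) = 1 / (2 * c) := by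
  have hpi := Real.pi_pos
  have e : (fun ξ : ℝ => 1 / (c ^ 2 + (2 * Real.pi * ξ) ^ 2)) =
      fun ξ => (1 / c ^ 2) * (1 + ((2 * Real.pi / c) * ξ) ^ 2)⁻¹ := by
    ext ξ
    have : 0 < c ^ 2 + (2 * Real.pi * ξ) ^ 2 := by positivity
    have : 0 < 1 + ((2 * Real.pi / c) * ξ) ^ 2 := by positivity
    field_simp
  have h0 : 2 * Real.pi / c ≠ 0 := by positivity
  rw [e]
  constructor
  · exact ((integrable_comp_mul_left_iff _ h0).2 integrable_inv_one_add_sq).const_mul _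
  · rw [integral_const_mul, Measure.integral_comp_mul_left (fun x => (1 + x ^ 2)⁻¹),
      integral_univ_inv_one_add_sq, abs_of_pos (by positivity)]
    simp
    field_simp

/-- Fourier inversion for `s² e^{-ys}`. -/
lemma kc_fourier (y t : ℝ) (hy : 0 < y) (ht : 0 < t) :
    Integrable (fun ξ : ℝ => 2 * ((y ^ 3 - 3 * y * (2 * Real.pi * ξ) ^ 2) * Real.cos (2 * Real.pi * ξ * t)
      + (3 * y ^ 2 * (2 * Real.pi * ξ) - (2 * Real.pi * ξ) ^ 3) * Real.sin (2 * Real.pi * ξ * t))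
      / (y ^ 2 + (2 * Real.pi * ξ) ^ 2) ^ 3) ∧
    ∫ ξ : ℝ, 2 * ((y ^ 3 - 3 * y * (2 * Real.pi * ξ) ^ 2) * Real.cos (2 * Real.pi * ξ * t)
      + (3 * y ^ 2 * (2 * Real.pi * ξ) - (2 * Real.pi * ξ) ^ 3) * Real.sin (2 * Real.pi * ξ * t))
      / (y ^ 2 + (2 * Real.pi * ξ) ^ 2) ^ 3 = t ^ 2 * Real.exp (-(t * y)) := by
  set f : ℝ → ℂ := indicator (Ioi 0) (fun s : ℝ => (s:ℂ) ^ 2 * Complex.exp (-((y:ℂ) * s))) with hf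
  have hF : ∀ ξ : ℝ, 𝓕 f ξ = 2 / ((y:ℂ) + (2 * Real.pi * ξ : ℝ) * Complex.I) ^ 3 := by
    intro ξ
    rw [Real.fourier_real_eq_integral_exp_smul, ← kc_laplace _ (by simp; exact hy),
      ← integral_indicator measurableSet_Ioi]
    congr 1
    ext s
    by_cases hs : s ∈ Ioi (0:ℝ)
    · simp only [hf, indicator_of_mem hs, smul_eq_mul]
      rw [mul_left_comm, ← Complex.exp_add]
      congr 2
      push_cast; ring
    · simp only [hf, indicator_of_notMem hs, smul_zero]
  have hfi : Integrable f := by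
    rw [hf, integrable_indicator_iff measurableSet_Ioi]
    refine Integrable.mono' (kc_integrable_sq y hy) (by fun_prop) ?_
    refine ae_of_all _ fun s => ?_
    rw [norm_mul, kc_norm_exp]; simp
  have hne : ∀ ξ : ℝ, ((y:ℂ) + (2 * Real.pi * ξ : ℝ) * Complex.I) ≠ 0 := by
    intro ξ h
    have := congrArg Complex.re h
    simp at this; exact hy.ne' this
  have hnsq : ∀ ξ : ℝ, ‖((y:ℂ) + (2 * Real.pi * ξ : ℝ) * Complex.I)‖ ^ 2 = y ^ 2 + (2 * Real.pi * ξ) ^ 2 := by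
    intro ξ
    rw [Complex.sq_norm, Complex.normSq_add_mul_I]
  have hFi : Integrable (𝓕 f) := by
    have e : 𝓕 f = fun ξ : ℝ => 2 / ((y:ℂ) + (2 * Real.pi * ξ : ℝ) * Complex.I) ^ 3 := funext hF
    rw [e]
    refine Integrable.mono' (((kc_int_inv y hy).1).const_mul (2 / y)) ?_ ?_
    · refine Continuous.aestronglyMeasurable ?_
      refine continuous_const.div (by fun_prop) fun ξ => pow_ne_zero _ (hne ξ)
    · refine ae_of_all _ fun ξ => ?_
      rw [norm_div, norm_pow, pow_succ, hnsq]
      have h3 : y ≤ ‖((y:ℂ) + (2 * Real.pi * ξ : ℝ) * Complex.I)‖ := by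
        have := Complex.abs_re_le_norm ((y:ℂ) + (2 * Real.pi * ξ : ℝ) * Complex.I)
        simp [abs_of_pos hy] at this ⊢; exact this
      have h4 : 0 < y ^ 2 + (2 * Real.pi * ξ) ^ 2 := by positivity
      rw [div_mul_div_comm, mul_one, mul_comm y]
      simp only [Complex.norm_ofNat]
      gcongr
  have hc : ContinuousAt f t := by
    have : f =ᶠ[nhds t] (fun s : ℝ => (s:ℂ) ^ 2 * Complex.exp (-((y:ℂ) * s))) := by
      filter_upwards [Ioi_mem_nhds ht] with s hs
      rw [hf, indicator_of_mem hs]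
    refine ContinuousAt.congr ?_ this.symm
    fun_prop
  have hinv := hfi.fourierInv_fourier_eq hFi hc
  rw [Real.fourierInv_eq'] at hinv
  have hre : ∀ ξ : ℝ, (Complex.exp (((2 * Real.pi * inner ℝ ξ t : ℝ)) * Complex.I) • 𝓕 f ξ).re =
     2 * ((y ^ 3 - 3 * y * (2 * Real.pi * ξ) ^ 2) * Real.cos (2 * Real.pi * ξ * t)
      + (3 * y ^ 2 * (2 * Real.pi * ξ) - (2 * Real.pi * ξ) ^ 3) * Real.sin (2 * Real.pi * ξ * t))
      / (y ^ 2 + (2 * Real.pi * ξ) ^ 2) ^ 3 := by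
    intro ξ
    have e1 : inner ℝ ξ t = ξ * t := by simp [mul_comm]
    rw [e1, hF, show 2 * Real.pi * (ξ * t) = 2 * Real.pi * ξ * t by ring, smul_eq_mul]
    set β := 2 * Real.pi * ξ with hβ
    have h5 : (2:ℂ) / ((y:ℂ) + β * Complex.I) ^ 3 =
        ((2 * (y^3 - 3 * y * β^2) / (y^2+β^2)^3 : ℝ) : ℂ) + ((2 * (β^3 - 3 * y^2 * β) / (y^2+β^2)^3 : ℝ) : ℂ) * Complex.I := by
      have h6 : ((y:ℂ)^2 + (β:ℂ)^2) ≠ 0 := by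
        have : (0:ℝ) < y^2+β^2 := by positivity
        exact_mod_cast this.ne'
      have h7 := hne ξ
      rw [← hβ] at h7
      rw [div_eq_iff (pow_ne_zero _ h7)]
      push_cast
      field_simp
      linear_combination (3*(y:ℂ)^2*β^4*(1+Complex.I^2)+8*(y:ℂ)^3*β^3*Complex.I+6*(y:ℂ)^4*β^2+(β:ℂ)^6*(1-Complex.I^2)) * Complex.I_sq
    have h9 : ∀ C S A B : ℝ, (((C:ℂ) + S * Complex.I) * ((A:ℂ) + B * Complex.I)).re = C * A - S * B := by
      intro C S A B; simp
    rw [h5, Complex.exp_mul_I, ← Complex.ofReal_cos, ← Complex.ofReal_sin, h9]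
    ring
  have hIntg : Integrable (fun ξ : ℝ => Complex.exp (((2 * Real.pi * inner ℝ ξ t : ℝ)) * Complex.I) • 𝓕 f ξ) := by
    refine Integrable.bdd_mul (c := 1) hFi ?_ ?_
    · refine Continuous.aestronglyMeasurable ?_
      fun_prop
    · exact ae_of_all _ fun ξ => by rw [Complex.norm_exp_ofReal_mul_I]
  constructor
  · exact hIntg.re.congr (ae_of_all _ hre)
  · have := congrArg Complex.re hinv
    have h8 := integral_re hIntg
    simp only [RCLike.re_to_complex] at h8
    rw [← h8] at this
    simp only [hre] at this
    rw [this, hf, indicator_of_mem (by exact ht : t ∈ Ioi (0:ℝ))]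
    have : (t:ℂ) ^ 2 * Complex.exp (-((y:ℂ) * t)) = ((t ^ 2 * Real.exp (-(t * y)) : ℝ) : ℂ) := by
      push_cast; rw [mul_comm (y:ℂ)]
    rw [this, Complex.ofReal_re]
end Scalar
section Resolvent
open MeasureTheory Filter Set
variable {ι : Type*} [Fintype ι] {𝒜 : Type*} [NormedRing 𝒜] [NormedAlgebra ℝ 𝒜] [CompleteSpace 𝒜]

lemma kc_finite_integral (M : (ι → ℝ) →ₐ[ℝ] 𝒜) (y : ι → ℝ) (g : ℝ → ℝ) (hg : Continuous g)
    (hg1 : ∀ r, |g r| ≤ 1) (hV : ∀ r, 0 ≤ r → ‖M (fun i => Real.exp (-(r * y i)))‖ ≤ 1)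
    (s : ℝ) (hs : 0 ≤ s) :
    ‖M (fun i => ∫ r in (0:ℝ)..s, g r * Real.exp (-(r * y i)))‖ ≤ s := by
  simp only [intervalIntegral.integral_of_le hs]
  refine (kc_integral M (volume.restrict (Ioc 0 s)) (fun r i => g r * Real.exp (-(r * y i)))
    (fun _ => 1) (fun i => ?_) (integrable_const 1) ?_).trans (by simp [hs])
  · have : Continuous fun r => g r * Real.exp (-(r * y i)) := by fun_prop
    exact (this.integrableOn_Icc (a := 0) (b := s)).mono_set Ioc_subset_Icc_self
  · refine (ae_restrict_iff' measurableSet_Ioc).2 (ae_of_all _ fun r hr => ?_)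
    refine (kc_smul M (g r) (fun i => rfl) (hV r hr.1.le)).trans ?_
    simpa using hg1 r

lemma kc_int_sin (y β : ℝ) (hβ : 0 < β) :
    ∫ r in (0:ℝ)..(Real.pi / β), Real.sin (β * r) * Real.exp (-(r * y)) =
      β * (1 + Real.exp (-(Real.pi / β * y))) / (y ^ 2 + β ^ 2) := by
  have h0 : 0 < y ^ 2 + β ^ 2 := by positivity
  have hd : ∀ r ∈ uIcc 0 (Real.pi / β), HasDerivAt
      (fun r => -(y * Real.sin (β * r) + β * Real.cos (β * r)) * Real.exp (-(r * y)) / (y ^ 2 + β ^ 2))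
      (Real.sin (β * r) * Real.exp (-(r * y))) r := by
    intro r _
    have e := (hasDerivAt_id r).const_mul β
    have h1 := (((((e.sin).const_mul y).add ((e.cos).const_mul β)).neg.mul
      (((hasDerivAt_id r).mul_const y).neg.exp)).div_const (y ^ 2 + β ^ 2))
    refine h1.congr_deriv ?_
    simp
    field_simp
    ring
  rw [intervalIntegral.integral_eq_sub_of_hasDerivAt hd
    (Continuous.intervalIntegrable (by fun_prop) _ _)]
  rw [mul_div_cancel₀ _ hβ.ne']
  simp
  field_simp
  ring

lemma kc_int_cos (y β : ℝ) (hβ : 0 < β) :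
    ∫ r in (0:ℝ)..(Real.pi / β), Real.cos (β * r) * Real.exp (-(r * y)) =
      y * (1 + Real.exp (-(Real.pi / β * y))) / (y ^ 2 + β ^ 2) := by
  have h0 : 0 < y ^ 2 + β ^ 2 := by positivity
  have hd : ∀ r ∈ uIcc 0 (Real.pi / β), HasDerivAt
      (fun r => (β * Real.sin (β * r) + (-y) * Real.cos (β * r)) * Real.exp (-(r * y)) / (y ^ 2 + β ^ 2))
      (Real.cos (β * r) * Real.exp (-(r * y))) r := by
    intro r _
    have e := (hasDerivAt_id r).const_mul β
    have h1 := (((((e.sin).const_mul β).add ((e.cos).const_mul (-y))).mul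
      (((hasDerivAt_id r).mul_const y).neg.exp)).div_const (y ^ 2 + β ^ 2))
    refine h1.congr_deriv ?_
    simp
    field_simp
    ring
  rw [intervalIntegral.integral_eq_sub_of_hasDerivAt hd
    (Continuous.intervalIntegrable (by fun_prop) _ _)]
  rw [mul_div_cancel₀ _ hβ.ne']
  simp
  field_simp
  ring

lemma kc_int_exp (y s : ℝ) (hy : 0 < y) :
    ∫ r in (0:ℝ)..s, (1:ℝ) * Real.exp (-(r * y)) = (1 - Real.exp (-(s * y))) / y := by
  have hd : ∀ r ∈ uIcc 0 s, HasDerivAt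
      (fun r => -Real.exp (-(r * y)) / y) (1 * Real.exp (-(r * y))) r := by
    intro r _
    have h1 := ((((hasDerivAt_id r).mul_const y).neg.exp).neg.div_const y)
    refine h1.congr_deriv ?_
    simp
    field_simp
  rw [intervalIntegral.integral_eq_sub_of_hasDerivAt hd
    (Continuous.intervalIntegrable (by fun_prop) _ _)]
  simp
  ring

structure KCHyp (M : (ι → ℝ) →ₐ[ℝ] 𝒜) (N : ι → ℝ) (B : ℝ) : Prop where
  one : ‖(1 : 𝒜)‖ ≤ 1
  Bpos : 0 < B
  nonneg : ∀ i, 0 ≤ N i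
  semi : ∀ t, 0 ≤ t → ‖M (fun i => Real.exp (-(t * N i)))‖ ≤ 1
  inv : ∀ t r, 0 ≤ t → 0 ≤ r → r ≤ 1 → ‖M (fun i => 1 / (1 + r * Real.exp (-(t * N i))))‖ ≤ B

variable {M : (ι → ℝ) →ₐ[ℝ] 𝒜} {N : ι → ℝ} {B : ℝ}

lemma KCHyp.semi' (h : KCHyp M N B) (c t : ℝ) (ht : 0 ≤ t) :
    ‖M (fun i => Real.exp (-(t * (N i + c))))‖ ≤ Real.exp (-(t * c)) := by
  refine (kc_smul M (Real.exp (-(t * c))) (fun i => ?_) (h.semi t ht)).trans (by simp)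
  rw [← Real.exp_add]; congr 1; ring

lemma KCHyp.semi1 (h : KCHyp M N B) (c t : ℝ) (hc : 0 ≤ c) (ht : 0 ≤ t) :
    ‖M (fun i => Real.exp (-(t * (N i + c))))‖ ≤ 1 :=
  (h.semi' c t ht).trans (Real.exp_le_one_iff.2 (by have := mul_nonneg ht hc; linarith))

lemma KCHyp.inv1 (h : KCHyp M N B) (c t : ℝ) (hc : 0 ≤ c) (ht : 0 ≤ t) :
    ‖M (fun i => 1 / (1 + Real.exp (-(t * (N i + c)))))‖ ≤ B := by
  have := h.inv t (Real.exp (-(t * c))) ht (Real.exp_pos _).le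
    (Real.exp_le_one_iff.2 (by have := mul_nonneg ht hc; linarith))
  convert this using 4 with i
  rw [← Real.exp_add]; congr 2; ring

lemma KCHyp.res (h : KCHyp M N B) (c β : ℝ) (hc : 0 < c) (hβ : 0 < β) :
    ‖M (fun i => 1 / ((N i + c) ^ 2 + β ^ 2))‖ ≤ Real.pi * B / β ^ 2 := by
  have hs : 0 ≤ Real.pi / β := by positivity
  have h1 := kc_finite_integral M (fun i => N i + c) (fun r => Real.sin (β * r)) (by fun_prop)
    (fun r => Real.abs_sin_le_one _) (fun r hr => h.semi1 c r hc.le hr) _ hs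
  have h2 := kc_smul M (1 / β) (fun i => rfl) (kc_mul M (fun i => rfl) h1 (h.inv1 c _ hc.le hs))
  simp only [kc_int_sin _ _ hβ] at h2
  rw [abs_of_pos (by positivity)] at h2
  refine (le_of_eq ?_).trans (h2.trans (le_of_eq (by field_simp)))
  congr 2; ext i
  have : 0 < 1 + Real.exp (-(Real.pi / β * (N i + c))) := by positivity
  have : 0 < (N i + c) ^ 2 + β ^ 2 := by positivity
  field_simp

lemma KCHyp.res1 (h : KCHyp M N B) (c β : ℝ) (hc : 0 < c) (hβ : 0 < β) :
    ‖M (fun i => (N i + c) / ((N i + c) ^ 2 + β ^ 2))‖ ≤ Real.pi * B / β := by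
  have hs : 0 ≤ Real.pi / β := by positivity
  have h1 := kc_finite_integral M (fun i => N i + c) (fun r => Real.cos (β * r)) (by fun_prop)
    (fun r => Real.abs_cos_le_one _) (fun r hr => h.semi1 c r hc.le hr) _ hs
  have h2 := (kc_mul M (fun i => rfl) h1 (h.inv1 c _ hc.le hs))
  simp only [kc_int_cos _ _ hβ] at h2
  refine (le_of_eq ?_).trans (h2.trans (le_of_eq (by field_simp)))
  congr 2; ext i
  have : 0 < 1 + Real.exp (-(Real.pi / β * (N i + c))) := by positivity
  have : 0 < (N i + c) ^ 2 + β ^ 2 := by positivity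
  field_simp

lemma KCHyp.resreal (h : KCHyp M N B) (c : ℝ) (hc : 0 < c) :
    ‖M (fun i => 1 / (N i + c))‖ ≤ 2 / c := by
  have hs : 0 ≤ 1 / c := by positivity
  have hy : ∀ i, 0 < N i + c := fun i => by have := h.nonneg i; linarith
  have h1 := kc_finite_integral M (fun i => N i + c) (fun r => 1) (by fun_prop)
    (fun r => by simp) (fun r hr => h.semi1 c r hc.le hr) _ hs
  have h3 := h.semi' c (1 / c) hs
  rw [one_div_mul_cancel hc.ne'] at h3
  have h2 := kc_add M (χ := fun i => 1 / (N i + c)) (fun i => ?_) h1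
    (kc_mul M (fun i => rfl) h3 (le_refl ‖M (fun i => 1 / (N i + c))‖))
  · have h4 : Real.exp (-1) ≤ 1 / 2 := by
      rw [Real.exp_neg, one_div]
      refine inv_anti₀ (by norm_num) ?_
      have := Real.add_one_le_exp 1
      linarith
    have h5 := norm_nonneg (M (fun i => 1 / (N i + c)))
    have : ‖M (fun i => 1 / (N i + c))‖ ≤ 1 / c + 1 / 2 * ‖M (fun i => 1 / (N i + c))‖ :=
      h2.trans (by gcongr)
    have e : 2 / c = 2 * (1 / c) := by ring
    rw [e]; linarith
  · rw [kc_int_exp _ _ (hy i)]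
    have := hy i
    field_simp
    ring

lemma KCHyp.res2 (h : KCHyp M N B) (c β : ℝ) (hc : 0 < c) (hβ : 0 < β) :
    ‖M (fun i => 1 / ((N i + c) ^ 2 + β ^ 2))‖ ≤ 9 * (1 + Real.pi * B) / (c ^ 2 + β ^ 2) := by
  have hy : ∀ i, 0 < N i + c := fun i => by have := h.nonneg i; linarith
  have hB := h.Bpos
  have hpi := Real.pi_pos
  have hpB : 0 < Real.pi * B := by positivity
  set p := ‖M (fun i => 1 / ((N i + c) ^ 2 + β ^ 2))‖ with hp
  rw [le_div_iff₀ (by positivity)]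
  rcases le_total (8 * β ^ 2) (c ^ 2) with h8 | h8
  · have h1 := h.resreal c hc
    have h2 := kc_mul M (χ := fun i => 1 / (N i + c) * (1 / (N i + c))) (fun i => rfl) h1 h1
    have h3 := kc_add M (χ := fun i => 1 / ((N i + c) ^ 2 + β ^ 2)) (fun i => ?_) h2
      (kc_smul M (- β ^ 2) (fun i => rfl)
      (kc_mul M (fun i => rfl) h2 (le_refl p)))
    · rw [abs_neg, abs_of_pos (by positivity), ← hp] at h3
      have h4 : p * c ^ 2 ≤ 4 + 4 * β ^ 2 * p := by
        have : p ≤ (4 + 4 * β ^ 2 * p) / c ^ 2 := h3.trans (le_of_eq (by field_simp; ring))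
        rwa [le_div_iff₀ (by positivity)] at this
      have h5 : 0 ≤ p := norm_nonneg _
      nlinarith
    · have := hy i
      have : 0 < (N i + c) ^ 2 + β ^ 2 := by positivity
      field_simp
      ring
  · have h1 := h.res c β hc hβ
    rw [← hp, le_div_iff₀ (by positivity)] at h1
    have h5 : 0 ≤ p := norm_nonneg _
    nlinarith

lemma KCHyp.deriv_aux (h : KCHyp M N B) (c β t : ℝ) (hc : 0 < c) (hβ : 0 < β) :
    ‖M (fun i => (N i + c) * (2 * (((N i + c) ^ 3 - 3 * (N i + c) * β ^ 2) * Real.cos (β * t)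
      + (3 * (N i + c) ^ 2 * β - β ^ 3) * Real.sin (β * t))
      / ((N i + c) ^ 2 + β ^ 2) ^ 3))‖ ≤
      16 * (1 + Real.pi * B) ^ 2 * (9 * (1 + Real.pi * B)) * (1 / (c ^ 2 + β ^ 2)) := by
  have hpi := Real.pi_pos
  have hB := h.Bpos
  set L := 1 + Real.pi * B with hL
  have hL0 : 0 ≤ L := by positivity
  have hy : ∀ i, 0 < N i + c := fun i => by have := h.nonneg i; linarith
  have hD : ∀ i, 0 < (N i + c) ^ 2 + β ^ 2 := fun i => by have := hy i; positivity
  -- `b = β²/(y²+β²)`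
  have hb : ‖M (fun i => β ^ 2 * (1 / ((N i + c) ^ 2 + β ^ 2)))‖ ≤ Real.pi * B := by
    refine (kc_smul M (β ^ 2) (fun i => rfl) (h.res c β hc hβ)).trans (le_of_eq ?_)
    rw [abs_of_pos (by positivity)]; field_simp
  have ha : ‖M (fun i => (N i + c) ^ 2 / ((N i + c) ^ 2 + β ^ 2))‖ ≤ L := by
    refine (kc_add M (fun i => ?_) (kc_one M h.one) (kc_smul M (-1) (fun i => rfl) hb)).trans
      (le_of_eq ?_)
    · have := hD i; field_simp; ring
    · simp [hL]
  have hb : ‖M (fun i => β ^ 2 * (1 / ((N i + c) ^ 2 + β ^ 2)))‖ ≤ L := hb.trans (by linarith)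
  have hm : ‖M (fun i => β * ((N i + c) / ((N i + c) ^ 2 + β ^ 2)))‖ ≤ L := by
    refine (kc_smul M β (fun i => rfl) (h.res1 c β hc hβ)).trans ?_
    rw [abs_of_pos (by positivity), mul_div_cancel₀ _ hβ.ne']; linarith
  have hS := Real.abs_sin_le_one (β * t)
  have hC := Real.abs_cos_le_one (β * t)
  have h1 := kc_smul M (2 * Real.cos (β * t)) (fun i => rfl) (kc_mul M (fun i => rfl) ha ha)
  have h2 := kc_smul M (-6 * Real.cos (β * t)) (fun i => rfl) (kc_mul M (fun i => rfl) hm hm)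
  have h3 := kc_smul M (6 * Real.sin (β * t)) (fun i => rfl) (kc_mul M (fun i => rfl) ha hm)
  have h4 := kc_smul M (-2 * Real.sin (β * t)) (fun i => rfl) (kc_mul M (fun i => rfl) hm hb)
  have h5 := kc_mul M (fun i => rfl) (kc_add M (fun i => rfl) (kc_add M (fun i => rfl) h1 h2)
    (kc_add M (fun i => rfl) h3 h4)) (h.res2 c β hc hβ)
  refine (le_of_eq ?_).trans (h5.trans ?_)
  · congr 2; ext i
    have := hD i
    field_simp
    ring
  · rw [← hL]
    simp only [abs_mul, abs_neg, Nat.abs_ofNat]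
    rw [mul_div_assoc, mul_assoc (16 * L ^ 2), ← mul_one_div L]
    have : 0 ≤ 9 * (L * (1 / (c ^ 2 + β ^ 2))) := by positivity
    rw [mul_assoc 9 L]
    refine mul_le_mul_of_nonneg_right ?_ this
    nlinarith [mul_nonneg hL0 hL0, mul_le_mul_of_nonneg_right hS (mul_nonneg hL0 hL0),
      mul_le_mul_of_nonneg_right hC (mul_nonneg hL0 hL0)]

lemma KCHyp.deriv_aux' (h : KCHyp M N B) (c β t : ℝ) (hc : 0 < c) (hβ : β ≠ 0) :
    ‖M (fun i => (N i + c) * (2 * (((N i + c) ^ 3 - 3 * (N i + c) * β ^ 2) * Real.cos (β * t)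
      + (3 * (N i + c) ^ 2 * β - β ^ 3) * Real.sin (β * t))
      / ((N i + c) ^ 2 + β ^ 2) ^ 3))‖ ≤
      16 * (1 + Real.pi * B) ^ 2 * (9 * (1 + Real.pi * B)) * (1 / (c ^ 2 + β ^ 2)) := by
  rcases lt_or_gt_of_ne hβ with h0 | h0
  · have := h.deriv_aux c (-β) t hc (by linarith)
    refine (le_of_eq ?_).trans (this.trans (le_of_eq ?_))
    · congr 2; ext i
      rw [neg_mul, Real.cos_neg, Real.sin_neg]; ring
    · ring
  · exact h.deriv_aux c β t hc h0

lemma KCHyp.deriv (h : KCHyp M N B) (t : ℝ) (ht : 0 < t) :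
    ‖M (fun i => N i * Real.exp (-(t * N i)))‖ ≤ (1 + 3 * (72 * (1 + Real.pi * B) ^ 3)) / t := by
  have hpi := Real.pi_pos
  have hB := h.Bpos
  set c := 1 / t with hc
  have hc0 : 0 < c := by positivity
  have hy : ∀ i, 0 < N i + c := fun i => by have := h.nonneg i; linarith
  have h1 := kc_integral M volume (fun ξ : ℝ => fun i => (N i + c) * (2 * (((N i + c) ^ 3 -
      3 * (N i + c) * (2 * Real.pi * ξ) ^ 2) * Real.cos (2 * Real.pi * ξ * t)
      + (3 * (N i + c) ^ 2 * (2 * Real.pi * ξ) - (2 * Real.pi * ξ) ^ 3) * Real.sin (2 * Real.pi * ξ * t))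
      / ((N i + c) ^ 2 + (2 * Real.pi * ξ) ^ 2) ^ 3))
      (fun ξ => 16 * (1 + Real.pi * B) ^ 2 * (9 * (1 + Real.pi * B)) *
        (1 / (c ^ 2 + (2 * Real.pi * ξ) ^ 2)))
      (fun i => ((kc_fourier (N i + c) t (hy i) ht).1).const_mul _)
      ((kc_int_inv c hc0).1.const_mul _)
      (by
        have : ∀ᵐ ξ : ℝ, ξ ≠ 0 := by simp [ae_iff]
        filter_upwards [this] with ξ hξ
        exact h.deriv_aux' c _ t hc0 (by positivity))
  simp only [integral_const_mul] at h1
  rw [(kc_int_inv c hc0).2] at h1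
  have h2 : ∀ i, _ := fun i => (kc_fourier (N i + c) t (hy i) ht).2
  simp only [h2] at h1
  have h3 := kc_smul M (Real.exp 1 / t ^ 2) (χ := fun i => (N i + c) * Real.exp (-(t * N i)))
    (fun i => by
      have : Real.exp (-(t * (N i + c))) = Real.exp (-(t * N i)) * (Real.exp 1)⁻¹ := by
        rw [← Real.exp_neg, ← Real.exp_add]; congr 1; rw [hc]; field_simp; ring
      rw [this]
      have := Real.exp_pos 1
      field_simp) h1
  have h4 := kc_add M (χ := fun i => N i * Real.exp (-(t * N i))) (fun i => by ring) h3
    (kc_smul M (-c) (fun i => rfl) (h.semi t ht.le))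
  refine h4.trans ?_
  rw [abs_neg, abs_of_pos hc0, abs_of_pos (by positivity), hc]
  have he : Real.exp 1 ≤ 3 := by have := Real.exp_one_lt_d9; linarith
  have h6 : 0 ≤ 1 + Real.pi * B := by positivity
  calc _ = (1 + Real.exp 1 * (72 * (1 + Real.pi * B) ^ 3)) / t := by field_simp; ring
    _ ≤ _ := by gcongr
end Resolvent
section Final
open MeasureTheory Filter Set
variable {ι : Type*} [Fintype ι] {𝒜 : Type*} [NormedRing 𝒜] [NormedAlgebra ℝ 𝒜]

lemma kc_sinc (k : ℕ) : HasSum (fun j : ℕ => ((-1) ^ j * Real.pi ^ (2 * j) / (2 * j + 1).factorial : ℝ) *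
    ((k:ℝ) - 1) ^ (2 * j)) (if k = 1 then 1 else 0) := by
  by_cases hk : k = 1
  · subst hk
    simp only [Nat.cast_one, sub_self, if_true]
    convert! hasSum_single (f := fun j : ℕ => ((-1) ^ j * Real.pi ^ (2 * j) / (2 * j + 1).factorial : ℝ) *
      (0:ℝ) ^ (2 * j)) 0 ?_ using 1
    · simp
    · intro j hj
      simp [hj]
  · rw [if_neg hk]
    have hk1 : ((k:ℝ) - 1) ≠ 0 := by
      rw [sub_ne_zero]; exact_mod_cast hk
    have h := (Real.hasSum_sin (Real.pi * ((k:ℝ) - 1))).mul_left (1 / (Real.pi * ((k:ℝ) - 1)))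
    have h0 : Real.sin (Real.pi * ((k:ℝ) - 1)) = 0 := by
      rw [mul_comm]
      have := Real.sin_int_mul_pi ((k:ℤ) - 1)
      push_cast at this
      exact this
    rw [h0, mul_zero] at h
    refine h.congr_fun ?_ |> fun h => h
    intro j
    have := Real.pi_pos
    rw [pow_succ (Real.pi * ((k:ℝ) - 1)), mul_pow]
    field_simp

lemma kc_summable : Summable (fun j : ℕ => (1 / 2 : ℝ) ^ (2 * j) + (2 * Real.pi) ^ (2 * j) / (2 * j).factorial) := by
  have h1 : Summable (fun n : ℕ => (1 / 2 : ℝ) ^ n) := summable_geometric_two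
  have h2 : Summable (fun n : ℕ => (2 * Real.pi) ^ n / n.factorial) := Real.summable_pow_div_factorial _
  have hinj : Function.Injective (fun j : ℕ => 2 * j) := fun a b h => by simpa using h
  exact (h1.comp_injective hinj).add (h2.comp_injective hinj)

lemma kc_final (C0 : ℝ) (hC : 1 ≤ C0) (M : (ι → ℝ) →ₐ[ℝ] 𝒜) (h1 : ‖(1 : 𝒜)‖ ≤ 1) (k : ι → ℕ)
    (hT : ∀ t, 0 ≤ t → ‖M (fun i => Real.exp (-(t * k i)))‖ ≤ 1)
    (hD : ∀ t, 0 < t → ‖M (fun i => k i * Real.exp (-(t * k i)))‖ ≤ C0 / t) :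
    ‖M (fun i => if k i = 1 then 1 else 0)‖ ≤
      Real.exp (4 * Real.pi * Real.exp 1 * C0) * ∑' j : ℕ, ((1 / 2 : ℝ) ^ (2 * j) + (2 * Real.pi) ^ (2 * j) / (2 * j).factorial) := by
  have hpi := Real.pi_pos
  set a := 4 * Real.pi * Real.exp 1 * C0 with ha
  have ha0 : 0 < a := by positivity
  have hpow : ∀ n : ℕ, ‖M (fun i => ((k i : ℝ) - 1) ^ n * Real.exp (-(a * k i)))‖ ≤
      2 ^ n * ((C0 * n / a) ^ n + 1) := by
    intro n
    rcases Nat.eq_zero_or_pos n with rfl | hn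
    · simp only [pow_zero, one_mul]
      exact (hT a ha0.le).trans (by norm_num)
    · have hn0 : (0:ℝ) < n := by exact_mod_cast hn
      have e1 : ‖M (fun i => ((k i : ℝ) - 1) * Real.exp (-(a / n * k i)))‖ ≤ C0 * n / a + 1 := by
        refine (kc_add M (fun i => ?_) (hD (a / n) (by positivity))
          (kc_smul M (-1) (fun i => rfl) (hT (a / n) (by positivity)))).trans (le_of_eq ?_)
        · ring
        · simp; field_simp
      have e2 := kc_pow M h1 e1 n
      refine (le_of_eq ?_).trans (e2.trans ?_)
      · congr 2; ext i
        rw [mul_pow, ← Real.exp_nat_mul]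
        congr 2; field_simp
      · have hx : 0 ≤ C0 * n / a := by positivity
        rcases le_total (C0 * n / a) 1 with hh | hh
        · calc (C0 * n / a + 1) ^ n ≤ 2 ^ n := by gcongr; linarith
            _ ≤ _ := by
              have : 0 ≤ (C0 * n / a) ^ n := by positivity
              nlinarith [pow_pos (two_pos : (0:ℝ) < 2) n]
        · calc (C0 * n / a + 1) ^ n ≤ (2 * (C0 * n / a)) ^ n := by gcongr; linarith
            _ = 2 ^ n * (C0 * n / a) ^ n := by rw [mul_pow]
            _ ≤ _ := by
              nlinarith [pow_pos (two_pos : (0:ℝ) < 2) n]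
  have hterm : ∀ j : ℕ, ‖M (fun i => ((-1) ^ j * Real.pi ^ (2 * j) / (2 * j + 1).factorial : ℝ) *
      (((k i : ℝ) - 1) ^ (2 * j) * Real.exp (-(a * k i))))‖ ≤
      (1 / 2 : ℝ) ^ (2 * j) + (2 * Real.pi) ^ (2 * j) / (2 * j).factorial := by
    intro j
    refine (kc_smul M _ (fun i => rfl) (hpow (2 * j))).trans ?_
    set n := 2 * j with hn
    rw [abs_div, abs_mul, abs_pow, abs_neg, abs_one, one_pow, one_mul, abs_of_pos (by positivity),
      abs_of_pos (by positivity)]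
    have hf : ((n.factorial : ℕ) : ℝ) ≤ (n + 1).factorial := by
      exact_mod_cast Nat.factorial_le (Nat.le_succ n)
    have hf0 : (0:ℝ) < n.factorial := by positivity
    have he : (n:ℝ) ^ n / n.factorial ≤ Real.exp 1 ^ n := by
      rw [← Real.exp_nat_mul, mul_one]
      exact Real.pow_div_factorial_le_exp n (by positivity) n
    calc Real.pi ^ n / (n + 1).factorial * (2 ^ n * ((C0 * n / a) ^ n + 1))
        ≤ Real.pi ^ n / n.factorial * (2 ^ n * ((C0 * n / a) ^ n + 1)) := by gcongr
      _ = (2 * Real.pi * C0 / a) ^ n * ((n:ℝ) ^ n / n.factorial) + (2 * Real.pi) ^ n / n.factorial := by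
          simp only [mul_pow, div_pow]; field_simp
      _ ≤ (2 * Real.pi * C0 / a) ^ n * Real.exp 1 ^ n + (2 * Real.pi) ^ n / n.factorial := by gcongr
      _ = _ := by
          rw [← mul_pow]
          congr 2
          rw [ha]; field_simp; norm_num
  refine kc_tendsto M (fun J i => ∑ j ∈ Finset.range J, Real.exp a * (((-1) ^ j * Real.pi ^ (2 * j) / (2 * j + 1).factorial : ℝ) *
      (((k i : ℝ) - 1) ^ (2 * j) * Real.exp (-(a * k i))))) _ _ ?_ ?_
  · intro i
    have := ((kc_sinc (k i)).mul_left (Real.exp a * Real.exp (-(a * k i)))).tendsto_sum_nat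
    have e : Real.exp a * Real.exp (-(a * k i)) * (if k i = 1 then 1 else 0) =
        (if k i = 1 then 1 else 0) := by
      split_ifs with hk
      · rw [hk, ← Real.exp_add]; simp
      · simp
    rw [e] at this
    refine this.congr fun J => Finset.sum_congr rfl fun j _ => by ring
  · intro J
    refine (kc_sum M _ _ _ (fun j _ => kc_smul M (Real.exp a) (fun i => rfl) (hterm j))).trans ?_
    rw [abs_of_pos (Real.exp_pos a), ← Finset.mul_sum]
    gcongr
    exact kc_summable.sum_le_tsum _ (fun j _ => by positivity)

/-- Abstract form: uniform bound for the multiplier of the level-one projection. -/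
lemma kc_abstract (K : ℕ) (hK : 1 ≤ K) (δ : ℝ) (hδ : 0 < δ) : ∃ C : ℝ, ∀ (ι : Type) [Fintype ι] (𝒜 : Type u)
    [NormedRing 𝒜] [NormedAlgebra ℝ 𝒜] [CompleteSpace 𝒜] (M : (ι → ℝ) →ₐ[ℝ] 𝒜) (k : ι → ℕ),
    ‖(1 : 𝒜)‖ ≤ 1 → (∀ t, 0 ≤ t → ‖M (fun i => Real.exp (-(t * k i)))‖ ≤ 1) →
    (∀ t, 0 ≤ t → ‖M (fun i => (1 - Real.exp (-(t * k i))) ^ K)‖ ≤ 2 ^ K - δ) →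
    ‖M (fun i => if k i = 1 then 1 else 0)‖ ≤ C := by
  refine ⟨Real.exp (4 * Real.pi * Real.exp 1 * (1 + 3 * (72 * (1 + Real.pi * (2 * (K * 2 ^ K / δ))) ^ 3))) *
    ∑' j : ℕ, ((1 / 2 : ℝ) ^ (2 * j) + (2 * Real.pi) ^ (2 * j) / (2 * j).factorial),
    fun ι _ 𝒜 _ _ _ M k h1 hT hKt => ?_⟩
  · have hB : (0:ℝ) < K * 2 ^ K / δ := by
      have : (0:ℝ) < K := by exact_mod_cast hK
      positivity
    have H : KCHyp M (fun i => (k i : ℝ)) (2 * (K * 2 ^ K / δ)) :=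
      { one := h1
        Bpos := by positivity
        nonneg := fun i => by positivity
        semi := hT
        inv := fun t r ht hr0 hr1 => kc_inv_r M h1 _ _ r hB (fun i => (Real.exp_pos _).le)
          (hT t ht) hr0 hr1 (kc_inv M h1 _ K δ hδ (fun i => (Real.exp_pos _).le) (hT t ht) (hKt t ht)) }
    have hB2 := H.Bpos
    exact kc_final (1 + 3 * (72 * (1 + Real.pi * (2 * (K * 2 ^ K / δ))) ^ 3))
      (by have := Real.pi_pos; have : 0 ≤ (1 + Real.pi * (2 * (K * 2 ^ K / δ))) ^ 3 := by positivity
          linarith) M h1 k hT (fun t ht => H.deriv t ht)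
end Final
section Geometry
variable {X : Type*} [NormedAddCommGroup X] [NormedSpace ℝ X]

lemma kc_rad_abs {n : ℕ} (k : Fin n) (σ : Fin n → Bool) : |rademacher k σ| = 1 := by
  unfold rademacher; split_ifs <;> simp

lemma kc_rad_sq {n : ℕ} (k : Fin n) (σ : Fin n → Bool) : rademacher k σ * rademacher k σ = 1 := by
  unfold rademacher; split_ifs <;> simp

lemma kc_upper {n : ℕ} (y : Fin n → X) (hy : ∀ i, ‖y i‖ ≤ 1) (a : Fin n → ℝ) :
    ‖∑ i, a i • y i‖ ≤ ∑ i, |a i| := by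
  refine (norm_sum_le _ _).trans (Finset.sum_le_sum fun i _ => ?_)
  rw [norm_smul, Real.norm_eq_abs]
  exact mul_le_of_le_one_right (abs_nonneg _) (hy i)

lemma kc_l1 {n : ℕ} (hn : 1 ≤ n) (ω : ℝ) (hω : 0 ≤ ω) (y : Fin n → X) (hy : ∀ i, ‖y i‖ ≤ 1)
    (hs : ∀ ε : Fin n → Bool, (n:ℝ) - ω ≤ ‖∑ i, rademacher i ε • y i‖) (a : Fin n → ℝ) :
    (1 - ω) * ∑ i, |a i| ≤ ‖∑ i, a i • y i‖ := by
  haveI : Nonempty (Fin n) := ⟨⟨0, hn⟩⟩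
  obtain ⟨i0, hi0⟩ := Finite.exists_max (fun i => |a i|)
  set A := |a i0| with hA
  have hA0 : 0 ≤ A := abs_nonneg _
  set ε : Fin n → Bool := fun i => decide (0 ≤ a i) with hε
  have ha : ∀ i, a i = |a i| * rademacher i ε := by
    intro i
    simp only [rademacher, hε, decide_eq_true_eq]
    split_ifs with h
    · rw [abs_of_nonneg h, mul_one]
    · rw [abs_of_neg (not_le.1 h)]; ring
  have e : A • ∑ i, rademacher i ε • y i =
      ∑ i, a i • y i + ∑ i, ((A - |a i|) * rademacher i ε) • y i := by
    rw [← Finset.sum_add_distrib, Finset.smul_sum]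
    refine Finset.sum_congr rfl fun i _ => ?_
    rw [← add_smul, smul_smul]
    congr 1
    linear_combination -(ha i)
  have h1 : A * (n - ω) ≤ ‖∑ i, a i • y i‖ + ∑ i, (A - |a i|) := by
    calc A * (n - ω) ≤ A * ‖∑ i, rademacher i ε • y i‖ := by gcongr; exact hs ε
      _ = ‖A • ∑ i, rademacher i ε • y i‖ := by rw [norm_smul, Real.norm_of_nonneg hA0]
      _ ≤ ‖∑ i, a i • y i‖ + ‖∑ i, ((A - |a i|) * rademacher i ε) • y i‖ := by
        rw [e]; exact norm_add_le _ _
      _ ≤ _ := by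
        gcongr
        refine (kc_upper y hy _).trans (Finset.sum_le_sum fun i _ => ?_)
        rw [abs_mul, kc_rad_abs, mul_one, abs_of_nonneg (by have := hi0 i; linarith)]
  have h2 : A ≤ ∑ i, |a i| := Finset.single_le_sum (f := fun i => |a i|)
    (fun i _ => abs_nonneg _) (Finset.mem_univ i0)
  simp only [Finset.sum_sub_distrib, Finset.sum_const, Finset.card_univ, Fintype.card_fin,
    nsmul_eq_mul] at h1
  nlinarith

lemma kc_type {n : ℕ} (hn : 1 ≤ n) (lam : ℝ) (hlam : 1 < lam)
    (hno : ¬ ∃ x : Fin n → X, ∀ a : Fin n → ℝ,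
      lam⁻¹ * (∑ i, |a i|) ≤ ‖∑ i, a i • x i‖ ∧ ‖∑ i, a i • x i‖ ≤ ∑ i, |a i|) :
    ∃ θ : ℝ, θ < 1 ∧ ∀ x : Fin n → X, ∑ ε : Fin n → Bool, ‖∑ i, rademacher i ε • x i‖ ^ 2 ≤
      2 ^ n * (θ * (n * ∑ i, ‖x i‖ ^ 2)) := by
  have hn0 : (1:ℝ) ≤ n := by exact_mod_cast hn
  have hnpos : (0:ℝ) < n := by linarith
  have hl0 : 0 < lam⁻¹ := by positivity
  have hl1 : lam⁻¹ < 1 := inv_lt_one_of_one_lt₀ hlam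
  set ω := 1 - lam⁻¹ with hω
  set κ := ω / (2 * n) with hκ
  have hκ0 : 0 < κ := div_pos (by linarith) (by linarith)
  have hκn : 2 * n * κ = ω := by rw [hκ]; field_simp
  have hκ1 : κ ≤ 1 := by nlinarith
  set η := κ ^ 2 / (2 * n) with hη
  have hη0 : 0 < η := by positivity
  have hηn : 2 * n * η = κ ^ 2 := by rw [hη]; field_simp
  have hηκ : η ≤ κ := by nlinarith
  have h2n : (0:ℝ) < 2 ^ n := by positivity
  refine ⟨1 - η / 2 ^ n, by have : 0 < η / 2 ^ n := by positivity
                            linarith, fun x => ?_⟩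
  by_contra hcon
  push Not at hcon
  set Q := ∑ i, ‖x i‖ ^ 2 with hQ
  have hR : ∀ ε : Fin n → Bool, ‖∑ i, rademacher i ε • x i‖ ≤ ∑ i, ‖x i‖ := by
    intro ε
    refine (norm_sum_le _ _).trans (le_of_eq (Finset.sum_congr rfl fun i _ => ?_))
    rw [norm_smul, Real.norm_eq_abs, kc_rad_abs, one_mul]
  have hRQ : (∑ i, ‖x i‖) ^ 2 ≤ n * Q := by
    have := sq_sum_le_card_mul_sum_sq (s := Finset.univ) (f := fun i => ‖x i‖)
    simpa using this
  have hup : ∀ ε : Fin n → Bool, ‖∑ i, rademacher i ε • x i‖ ^ 2 ≤ n * Q := fun ε =>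
    (pow_le_pow_left₀ (norm_nonneg _) (hR ε) 2).trans hRQ
  have hlow : ∀ ε : Fin n → Bool, n * Q * (1 - η) < ‖∑ i, rademacher i ε • x i‖ ^ 2 := by
    intro ε
    by_contra hc
    push Not at hc
    have : ∑ ε : Fin n → Bool, (n * Q - ‖∑ i, rademacher i ε • x i‖ ^ 2) ≥
        n * Q - ‖∑ i, rademacher i ε • x i‖ ^ 2 :=
      Finset.single_le_sum (f := fun ε : Fin n → Bool => n * Q - ‖∑ i, rademacher i ε • x i‖ ^ 2)
        (fun ε _ => by have := hup ε; linarith) (Finset.mem_univ ε)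
    rw [Finset.sum_sub_distrib] at this
    simp only [Finset.sum_const, Finset.card_univ, Fintype.card_pi_const, Fintype.card_bool,
      nsmul_eq_mul] at this
    push_cast at this
    have e : 2 ^ n * ((1 - η / 2 ^ n) * (n * Q)) = 2 ^ n * (n * Q) - η * (n * Q) := by
      field_simp
    rw [e] at hcon
    linarith
  have hQ0 : 0 ≤ Q := Finset.sum_nonneg fun i _ => by positivity
  have hQpos : 0 < Q := by
    rcases hQ0.eq_or_lt with h | h
    · have h1 := hlow (fun _ => true)
      have h2 := hup (fun _ => true)
      rw [← h] at h1 h2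
      linarith
    · exact h
  set s := Real.sqrt (Q / n) with hs
  have hs0 : 0 < s := Real.sqrt_pos.2 (by positivity)
  have hsQ : n * s ^ 2 = Q := by rw [hs, Real.sq_sqrt (by positivity)]; field_simp
  have hη1 : η ≤ 1 := hηκ.trans hκ1
  have hlow2 : ∀ ε : Fin n → Bool, n * s * (1 - η) ≤ ‖∑ i, rademacher i ε • x i‖ := by
    intro ε
    refine le_of_sq_le_sq ?_ (norm_nonneg _)
    refine le_trans ?_ (hlow ε).le
    rw [← hsQ]
    have : 0 ≤ (n * s) ^ 2 * ((1 - η) * η) := by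
      have : 0 ≤ 1 - η := by linarith
      positivity
    nlinarith
  have hxi : ∀ i, ‖x i‖ ≤ s * (1 + κ) := by
    intro i
    have h1 : ∑ j, (‖x j‖ - s) ^ 2 ≤ (κ * s) ^ 2 := by
      have e : ∑ j, (‖x j‖ - s) ^ 2 = Q - 2 * s * ∑ j, ‖x j‖ + n * s ^ 2 := by
        simp only [sub_sq, Finset.sum_add_distrib, Finset.sum_sub_distrib, Finset.sum_const,
          Finset.card_univ, Fintype.card_fin, nsmul_eq_mul, hQ, Finset.mul_sum]
        congr 2
        refine Finset.sum_congr rfl fun j _ => by ring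
      rw [e, ← hsQ]
      have h3 := (hlow2 (fun _ => true)).trans (hR _)
      have h4 : 2 * s * (n * s * (1 - η)) ≤ 2 * s * ∑ j, ‖x j‖ := by gcongr
      have h5 : (κ * s) ^ 2 = 2 * n * η * s ^ 2 := by rw [hηn]; ring
      rw [h5]; linarith
    have h2 : (‖x i‖ - s) ^ 2 ≤ (κ * s) ^ 2 :=
      (Finset.single_le_sum (f := fun j => (‖x j‖ - s) ^ 2) (fun j _ => sq_nonneg _)
        (Finset.mem_univ i)).trans h1
    have := abs_le_of_sq_le_sq h2 (by positivity)
    linarith [(abs_le.1 this).2]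
  have hd : 0 < s * (1 + κ) := by positivity
  apply hno
  refine ⟨fun i => (s * (1 + κ))⁻¹ • x i, fun a => ?_⟩
  have hy : ∀ i, ‖(s * (1 + κ))⁻¹ • x i‖ ≤ 1 := by
    intro i
    rw [norm_smul, Real.norm_of_nonneg (by positivity), inv_mul_le_iff₀ hd, mul_one]
    exact hxi i
  refine ⟨?_, kc_upper _ hy a⟩
  have := kc_l1 hn ω (by linarith) (fun i => (s * (1 + κ))⁻¹ • x i) hy (fun ε => ?_) a
  · rwa [hω, sub_sub_cancel] at this
  · have e : ∑ i, rademacher i ε • (s * (1 + κ))⁻¹ • x i = (s * (1 + κ))⁻¹ • ∑ i, rademacher i ε • x i := by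
      rw [Finset.smul_sum]; exact Finset.sum_congr rfl fun i _ => smul_comm _ _ _
    rw [e, norm_smul, Real.norm_of_nonneg (by positivity), le_inv_mul_iff₀ hd]
    refine le_trans ?_ (hlow2 ε)
    have : (1 + κ) * (n - ω) ≤ n * (1 - η) := by
      rw [← hκn]
      have := mul_le_mul_of_nonneg_left hηκ hnpos.le
      nlinarith [mul_nonneg hnpos.le (sq_nonneg κ)]
    nlinarith

/-- the type inequality forces `‖∏ (1 - P_j)‖ < 2 ^ K` -/
lemma kc_proj {Y : Type*} [NormedAddCommGroup Y] [NormedSpace ℝ Y] {ι : Type*} {K : ℕ} (hK : 1 ≤ K) (θ : ℝ)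
    (hθ : θ < 1) (hY : ∀ x : Fin K → Y, ∑ ε : Fin K → Bool, ‖∑ i, rademacher i ε • x i‖ ^ 2 ≤
      2 ^ K * (θ * (K * ∑ i, ‖x i‖ ^ 2)))
    (M : (ι → ℝ) →ₐ[ℝ] (Y →L[ℝ] Y)) (e : Fin K → ι → ℝ) (he : ∀ j i, e j i * e j i = e j i)
    (hM : ∀ j, ‖M (e j)‖ ≤ 1) :
    ‖M (∏ j, (1 - e j))‖ ≤ 2 ^ K - min 1 ((1 - θ) / 2) := by
  set δ := min 1 ((1 - θ) / 2) with hδ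
  have hδ1 : δ ≤ 1 := min_le_left _ _
  have hδ2 : δ ≤ (1 - θ) / 2 := min_le_right _ _
  have hδ0 : 0 < δ := lt_min one_pos (by linarith)
  have hMS : ∀ S : Finset (Fin K), ‖M (∏ j ∈ S, e j)‖ ≤ 1 := by
    intro S
    induction S using Finset.induction_on with
    | empty => rw [Finset.prod_empty, map_one]; exact ContinuousLinearMap.norm_id_le
    | insert a S ha ih =>
      rw [Finset.prod_insert ha, map_mul]
      exact (norm_mul_le _ _).trans (mul_le_one₀ (hM a) (norm_nonneg _) ih)
  have hexp : ∏ j, (1 - e j) = ∑ S : Finset (Fin K), (-1 : ℝ) ^ (#S) • ∏ j ∈ S, e j := by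
    have : ∀ j, (1 - e j) = (-e j) + 1 := fun j => by ring
    simp only [this, Finset.prod_add, Finset.prod_const_one, mul_one, Finset.powerset_univ]
    refine Finset.sum_congr rfl fun S _ => ?_
    rw [Finset.prod_neg]
    ext i
    simp
  have hK1 : (1:ℝ) ≤ 2 ^ K := one_le_pow₀ (by norm_num)
  refine ContinuousLinearMap.opNorm_le_of_unit_norm (by linarith) fun x hx => ?_
  by_contra hcon
  push Not at hcon
  obtain ⟨g, hg1, hg2⟩ := exists_dual_vector'' ℝ (M (∏ j, (1 - e j)) x)
  have hgS : ∀ S : Finset (Fin K), |g (M (∏ j ∈ S, e j) x)| ≤ 1 := by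
    intro S
    rw [← Real.norm_eq_abs]
    calc ‖g (M (∏ j ∈ S, e j) x)‖ ≤ ‖g‖ * (‖M (∏ j ∈ S, e j)‖ * ‖x‖) :=
        (g.le_opNorm _).trans (by gcongr; exact ContinuousLinearMap.le_opNorm _ _)
      _ ≤ 1 * (1 * 1) := by gcongr; exacts [hMS S, hx.le]
      _ = 1 := by norm_num
  have hsum : g (M (∏ j, (1 - e j)) x) = ∑ S : Finset (Fin K), (-1 : ℝ) ^ (#S) * g (M (∏ j ∈ S, e j) x) := by
    rw [hexp, map_sum, ContinuousLinearMap.sum_apply, map_sum]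
    refine Finset.sum_congr rfl fun S _ => ?_
    rw [map_smul, ContinuousLinearMap.smul_apply, map_smul, smul_eq_mul]
  have hle1 : ∀ S : Finset (Fin K), (-1 : ℝ) ^ (#S) * g (M (∏ j ∈ S, e j) x) ≤ 1 := by
    intro S
    refine (le_abs_self _).trans ?_
    rw [abs_mul, abs_pow, abs_neg, abs_one, one_pow, one_mul]
    exact hgS S
  have heach : ∀ S : Finset (Fin K), 1 - δ < (-1 : ℝ) ^ (#S) * g (M (∏ j ∈ S, e j) x) := by
    intro S
    have h1 := Finset.single_le_sum (f := fun S : Finset (Fin K) => 1 - (-1 : ℝ) ^ (#S) * g (M (∏ j ∈ S, e j) x))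
      (fun S _ => by have := hle1 S; linarith) (Finset.mem_univ S)
    rw [Finset.sum_sub_distrib, ← hsum, hg2] at h1
    simp only [Finset.sum_const, Finset.card_univ, Fintype.card_finset, Fintype.card_fin,
      nsmul_eq_mul, mul_one] at h1
    push_cast at h1
    simp only [RCLike.ofReal_real_eq_id, id] at h1
    linarith
  have hKpos : (0:ℝ) < K := by exact_mod_cast hK
  have hsign : ∀ ε : Fin K → Bool, K * (1 - δ) < ‖∑ j, rademacher j ε • M (e j) x‖ := by
    intro ε
    set U : Finset (Fin K) := Finset.univ.filter (fun j => ε j = true) with hU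
    have h1 : ∀ j, (-1 : ℝ) ^ (#U) * (rademacher j ε * g (M (∏ j ∈ U, e j) (M (e j) x))) > 1 - δ := by
      intro j
      rw [← ContinuousLinearMap.mul_apply, ← map_mul]
      by_cases hj : ε j = true
      · have hjU : j ∈ U := by simp [hU, hj]
        have e1 : (∏ j ∈ U, e j) * e j = ∏ j ∈ U, e j := by
          rw [← Finset.mul_prod_erase U e hjU, mul_right_comm]
          congr 1
          ext i; exact he j i
        rw [e1]
        simp only [rademacher, hj, if_true, one_mul]
        exact heach U
      · have hjU : j ∉ U := by simp [hU, hj]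
        have e1 : (∏ j ∈ U, e j) * e j = ∏ j ∈ insert j U, e j := by
          rw [Finset.prod_insert hjU, mul_comm]
        rw [e1]
        have := heach (insert j U)
        rw [Finset.card_insert_of_notMem hjU, pow_succ] at this
        simp only [rademacher, hj]
        simp at this ⊢
        linarith
    have h2 : K * (1 - δ) < ∑ j, (-1 : ℝ) ^ (#U) * (rademacher j ε * g (M (∏ j ∈ U, e j) (M (e j) x))) := by
      have : K * (1 - δ) = ∑ j : Fin K, (1 - δ) := by
        rw [Finset.sum_const, Finset.card_univ, Fintype.card_fin, nsmul_eq_mul]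
      rw [this]
      exact Finset.sum_lt_sum_of_nonempty ⟨⟨0, hK⟩, Finset.mem_univ _⟩ fun j _ => h1 j
    have h3 : ∑ j, (-1 : ℝ) ^ (#U) * (rademacher j ε * g (M (∏ j ∈ U, e j) (M (e j) x))) =
        (-1 : ℝ) ^ (#U) * g (M (∏ j ∈ U, e j) (∑ j, rademacher j ε • M (e j) x)) := by
      rw [← Finset.mul_sum, map_sum, map_sum]
      simp
    rw [h3] at h2
    refine h2.trans_le ((le_abs_self _).trans ?_)
    rw [abs_mul, abs_pow, abs_neg, abs_one, one_pow, one_mul, ← Real.norm_eq_abs]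
    set v := ∑ j, rademacher j ε • M (e j) x
    calc ‖g (M (∏ j ∈ U, e j) v)‖ ≤ ‖g‖ * (‖M (∏ j ∈ U, e j)‖ * ‖v‖) :=
        (g.le_opNorm _).trans (by gcongr; exact ContinuousLinearMap.le_opNorm _ _)
      _ ≤ 1 * (1 * ‖v‖) := by gcongr; exact hMS U
      _ = ‖v‖ := by ring
  have hlow : 2 ^ K * (K * (1 - δ)) ^ 2 < ∑ ε : Fin K → Bool, ‖∑ i, rademacher i ε • M (e i) x‖ ^ 2 := by
    have : (2:ℝ) ^ K * (K * (1 - δ)) ^ 2 = ∑ ε : Fin K → Bool, (K * (1 - δ)) ^ 2 := by simp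
    rw [this]
    refine Finset.sum_lt_sum_of_nonempty ⟨fun _ => true, Finset.mem_univ _⟩ fun ε _ => ?_
    exact pow_lt_pow_left₀ (hsign ε) (mul_nonneg hKpos.le (by linarith)) (by norm_num)
  have hup := hY (fun j => M (e j) x)
  have hbd : ∑ i, ‖M (e i) x‖ ^ 2 ≤ K := by
    calc ∑ i, ‖M (e i) x‖ ^ 2 ≤ ∑ i : Fin K, (1:ℝ) := by
          refine Finset.sum_le_sum fun i _ => ?_
          refine pow_le_one₀ (norm_nonneg _) ?_
          calc ‖M (e i) x‖ ≤ ‖M (e i)‖ * ‖x‖ := ContinuousLinearMap.le_opNorm _ _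
            _ ≤ 1 * 1 := by gcongr; exacts [hM i, hx.le]
            _ = 1 := by norm_num
      _ = K := by simp
  have hchain := hlow.trans_le hup
  have h5 : (K * (1 - δ)) ^ 2 < θ * (K * ∑ i, ‖M (e i) x‖ ^ 2) := lt_of_mul_lt_mul_left hchain (by positivity)
  have h6 : 0 ≤ ∑ i, ‖M (e i) x‖ ^ 2 := Finset.sum_nonneg fun i _ => by positivity
  have h7 : 1 - 2 * δ ≥ θ := by linarith
  have h8 : (1 - δ) ^ 2 ≥ θ := by nlinarith
  rcases le_total θ 0 with h0 | h0
  · have : θ * (K * ∑ i, ‖M (e i) x‖ ^ 2) ≤ 0 := mul_nonpos_of_nonpos_of_nonneg h0 (by positivity)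
    nlinarith [sq_nonneg (K * (1 - δ))]
  · have : θ * (K * ∑ i, ‖M (e i) x‖ ^ 2) ≤ θ * (K * K) := by gcongr
    have : θ * (K * K) ≤ (1 - δ) ^ 2 * (K * K) := by gcongr
    nlinarith
end Geometry
section Easy

lemma kc_cube_sum {n : ℕ} (F : (Fin (n+1) → Bool) → ℝ) :
    ∑ σ, F σ = ∑ τ : Fin n → Bool, (F (Fin.cons true τ) + F (Fin.cons false τ)) := by
  rw [← (Fin.consEquiv (fun _ : Fin (n+1) => Bool)).sum_comp, Fintype.sum_prod_type,
    Fintype.sum_bool, ← Finset.sum_add_distrib]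
  rfl

/-- moments of signed sums -/
lemma kc_moments : ∀ (n : ℕ) (σ : Fin n → Bool),
    (∑ τ : Fin n → Bool, (∑ k, rademacher k σ * rademacher k τ) ^ 2 = 2 ^ n * n) ∧
    (∑ τ : Fin n → Bool, (∑ k, rademacher k σ * rademacher k τ) ^ 4 ≤ 2 ^ n * (3 * n ^ 2))
  | 0, σ => by simp
  | n+1, σ => by
    obtain ⟨h2, h4⟩ := kc_moments n (Fin.tail σ)
    have hr : ∀ (b : Bool) (τ : Fin n → Bool), ∑ k, rademacher k σ * rademacher k (Fin.cons b τ : Fin (n+1) → Bool)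
        = rademacher 0 σ * (if b then 1 else -1) + ∑ k, rademacher k (Fin.tail σ) * rademacher k τ := by
      intro b τ
      rw [Fin.sum_univ_succ]
      rfl
    have hs := kc_rad_sq 0 σ
    set r := rademacher 0 σ
    have e2 : ∀ τ : Fin n → Bool,
        (r + ∑ k, rademacher k (Fin.tail σ) * rademacher k τ) ^ 2 + (-r + ∑ k, rademacher k (Fin.tail σ) * rademacher k τ) ^ 2 =
        2 * (∑ k, rademacher k (Fin.tail σ) * rademacher k τ) ^ 2 + 2 := fun τ => by
      linear_combination 2 * hs
    have e4 : ∀ τ : Fin n → Bool,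
        (r + ∑ k, rademacher k (Fin.tail σ) * rademacher k τ) ^ 4 + (-r + ∑ k, rademacher k (Fin.tail σ) * rademacher k τ) ^ 4 =
        2 * (∑ k, rademacher k (Fin.tail σ) * rademacher k τ) ^ 4 +
        12 * (∑ k, rademacher k (Fin.tail σ) * rademacher k τ) ^ 2 + 2 := fun τ => by
      linear_combination (12 * (∑ k, rademacher k (Fin.tail σ) * rademacher k τ) ^ 2 + 2 * (r * r + 1)) * hs
    rw [kc_cube_sum, kc_cube_sum]
    simp only [hr, if_true, mul_one, Bool.false_eq_true, if_false, mul_neg, e2, e4,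
      Finset.sum_add_distrib, ← Finset.mul_sum, h2, Finset.sum_const, Finset.card_univ,
      Fintype.card_pi_const, Fintype.card_bool, nsmul_eq_mul]
    push_cast
    have h0 : (0:ℝ) < 2 ^ n := by positivity
    constructor
    · rw [pow_succ]; ring
    · rw [pow_succ]; nlinarith

lemma kc_first_moment (n : ℕ) (hn : 1 ≤ n) (σ : Fin n → Bool) :
    2 ^ n * (Real.sqrt (6 * n) / 12) ≤ ∑ τ : Fin n → Bool, |∑ k, rademacher k σ * rademacher k τ| := by
  obtain ⟨h2, h4⟩ := kc_moments n σ
  have hn0 : (0:ℝ) < n := by exact_mod_cast hn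
  set q := Real.sqrt (6 * n) with hq
  have hq0 : 0 < q := Real.sqrt_pos.2 (by positivity)
  have hqs : q ^ 2 = 6 * n := Real.sq_sqrt (by positivity)
  have key : ∀ u : ℝ, q * (u ^ 2 / (6 * n) - u ^ 4 / (36 * n ^ 2)) ≤ |u| := by
    intro u
    have e : u ^ 2 / (6 * n) - u ^ 4 / (36 * n ^ 2) = (|u| / q) ^ 2 - (|u| / q) ^ 4 := by
      rw [div_pow, div_pow, sq_abs, hqs, show q ^ 4 = (q ^ 2) ^ 2 by ring, hqs,
        show |u| ^ 4 = (|u| ^ 2) ^ 2 by ring, sq_abs]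
      ring
    rw [e]
    have hv : 0 ≤ |u| / q := by positivity
    have h3 : |u| = q * (|u| / q) := by field_simp
    conv_rhs => rw [h3]
    refine mul_le_mul_of_nonneg_left ?_ hq0.le
    set v := |u| / q
    have : 0 ≤ v * (v ^ 3 - v + 1) := mul_nonneg hv (by nlinarith [sq_nonneg (v - 1), sq_nonneg (v-1/2), mul_nonneg hv (sq_nonneg (v - 1))])
    nlinarith
  refine le_trans ?_ (Finset.sum_le_sum fun τ _ => key _)
  rw [← Finset.mul_sum, Finset.sum_sub_distrib, ← Finset.sum_div, ← Finset.sum_div, h2]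
  have h5 : (∑ τ : Fin n → Bool, (∑ k, rademacher k σ * rademacher k τ) ^ 4) / (36 * n ^ 2) ≤ 2 ^ n / 12 := by
    rw [div_le_iff₀ (by positivity)]
    refine h4.trans (le_of_eq ?_)
    ring
  have h6 : (2:ℝ) ^ n * n / (6 * n) = 2 ^ n / 6 := by field_simp
  rw [h6]
  have : q * (2 ^ n / 6 - 2 ^ n / 12) ≤ q * (2 ^ n / 6 -
    (∑ τ : Fin n → Bool, (∑ k, rademacher k σ * rademacher k τ) ^ 4) / (36 * n ^ 2)) := by gcongr
  refine le_trans (le_of_eq ?_) this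
  ring

theorem kc_easy {X : Type*} [NormedAddCommGroup X] [NormedSpace ℝ X] (hX : KConvex X)
    (hc : ContainsL1nUniformly X) : False := by
  obtain ⟨C, hC⟩ := hX
  obtain ⟨n, hn⟩ := exists_nat_gt ((24 * C) ^ 2 + 1)
  have hnC : (24 * C) ^ 2 + 1 < n := hn
  have hn1 : 1 ≤ n := by
    have : (0:ℝ) < n := by nlinarith [sq_nonneg (24 * C)]
    exact_mod_cast this
  obtain ⟨x, hx⟩ := hc (2 ^ n) Nat.one_le_two_pow 2 (by norm_num)
  let E : (Fin n → Bool) ≃ Fin (2 ^ n) := Fintype.equivFinOfCardEq (by simp)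
  have hx' : ∀ a : (Fin n → Bool) → ℝ,
      (2:ℝ)⁻¹ * (∑ τ, |a τ|) ≤ ‖∑ τ, a τ • x (E τ)‖ ∧ ‖∑ τ, a τ • x (E τ)‖ ≤ ∑ τ, |a τ| := by
    intro a
    have := hx (fun i => a (E.symm i))
    rw [← E.sum_comp, ← E.sum_comp] at this
    simpa using this
  have hnorm : ∀ τ, ‖x (E τ)‖ ≤ 1 := by
    intro τ
    have := (hx' (Pi.single τ 1)).2
    have e1 : ∑ τ', (Pi.single τ 1 : (Fin n → Bool) → ℝ) τ' • x (E τ') = x (E τ) := by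
      rw [Finset.sum_eq_single τ]
      · simp
      · intro b _ hb; simp [Pi.single_eq_of_ne hb]
      · simp
    have e2 : ∑ τ', |(Pi.single τ 1 : (Fin n → Bool) → ℝ) τ'| = 1 := by
      rw [Finset.sum_eq_single τ]
      · simp
      · intro b _ hb; simp [Pi.single_eq_of_ne hb]
      · simp
    rwa [e1, e2] at this
  have h := hC n hn1 (fun τ => x (E τ))
  set q := Real.sqrt (6 * n) with hq
  have h2n : (0:ℝ) < 2 ^ n := by positivity
  have hlow : ∀ σ : Fin n → Bool, q / 24 ≤ ‖∑ k : Fin n, rademacher k σ •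
          ((2 ^ n : ℝ)⁻¹ • ∑ τ : Fin n → Bool, rademacher k τ • x (E τ))‖ := by
    intro σ
    have e : ∑ k : Fin n, rademacher k σ •
          ((2 ^ n : ℝ)⁻¹ • ∑ τ : Fin n → Bool, rademacher k τ • x (E τ)) =
        (2 ^ n : ℝ)⁻¹ • ∑ τ, (∑ k, rademacher k σ * rademacher k τ) • x (E τ) := by
      simp only [Finset.sum_smul, Finset.smul_sum, smul_smul]
      rw [Finset.sum_comm]
      refine Finset.sum_congr rfl fun τ _ => Finset.sum_congr rfl fun k _ => ?_
      congr 1; ring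
    rw [e, norm_smul, Real.norm_of_nonneg (by positivity), le_inv_mul_iff₀ h2n]
    refine le_trans ?_ (hx' _).1
    have := kc_first_moment n hn1 σ
    rw [← hq] at this
    linarith
  have hL : q / 24 ≤ Real.sqrt ((2 ^ n : ℝ)⁻¹ * ∑ σ : Fin n → Bool,
        ‖∑ k : Fin n, rademacher k σ •
          ((2 ^ n : ℝ)⁻¹ • ∑ τ : Fin n → Bool, rademacher k τ • x (E τ))‖ ^ 2) := by
    refine Real.le_sqrt_of_sq_le ?_
    rw [le_inv_mul_iff₀ h2n]
    have : (2 ^ n : ℝ) * (q / 24) ^ 2 = ∑ σ : Fin n → Bool, (q / 24) ^ 2 := by simp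
    rw [this]
    exact Finset.sum_le_sum fun σ _ => pow_le_pow_left₀ (by positivity) (hlow σ) 2
  have hR : Real.sqrt ((2 ^ n : ℝ)⁻¹ * ∑ σ : Fin n → Bool, ‖x (E σ)‖ ^ 2) ≤ 1 := by
    rw [Real.sqrt_le_iff, one_pow, inv_mul_le_iff₀ h2n]
    refine ⟨zero_le_one, ?_⟩
    have : (2 ^ n : ℝ) * 1 = ∑ σ : Fin n → Bool, (1:ℝ) := by simp
    rw [this]
    exact Finset.sum_le_sum fun σ _ => pow_le_one₀ (norm_nonneg _) (hnorm σ)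
  have hq1 : q / 24 ≤ |C| := by
    refine hL.trans (h.trans ?_)
    calc _ ≤ |C| * Real.sqrt ((2 ^ n : ℝ)⁻¹ * ∑ σ : Fin n → Bool, ‖x (E σ)‖ ^ 2) := by
          gcongr; exact le_abs_self C
      _ ≤ |C| * 1 := by gcongr
      _ = |C| := mul_one _
  have hqs : q ^ 2 = 6 * n := Real.sq_sqrt (by positivity)
  have hq0 : 0 ≤ q := Real.sqrt_nonneg _
  have : q ^ 2 ≤ (24 * |C|) ^ 2 := pow_le_pow_left₀ hq0 (by linarith) 2
  rw [mul_pow, sq_abs] at this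
  nlinarith
end Easy
section Cube

/-- Walsh functions -/
noncomputable def kcW {m : ℕ} (B : Finset (Fin m)) (σ : Fin m → Bool) : ℝ := ∏ i ∈ B, rademacher i σ

lemma kcW_orth {m : ℕ} (A B : Finset (Fin m)) :
    ∑ σ : Fin m → Bool, kcW A σ * kcW B σ = if A = B then 2 ^ m else 0 := by
  have h1 : ∀ (A : Finset (Fin m)) (σ : Fin m → Bool),
      kcW A σ = ∏ i, (if i ∈ A then (if σ i then (1:ℝ) else -1) else 1) := by
    intro A σ
    rw [kcW, Finset.prod_ite_mem, Finset.univ_inter]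
    rfl
  simp only [h1, ← Finset.prod_mul_distrib]
  have h2 := Finset.prod_univ_sum (fun _ : Fin m => (Finset.univ : Finset Bool))
    (fun i b => (if i ∈ A then (if b then (1:ℝ) else -1) else 1) * (if i ∈ B then (if b then (1:ℝ) else -1) else 1))
  rw [Fintype.piFinset_univ] at h2
  rw [← h2]
  split_ifs with h
  · subst h
    rw [Finset.prod_congr rfl (g := fun _ => (2:ℝ))]
    · simp
    · intro i _
      rw [Fintype.sum_bool]
      split_ifs <;> simp_all <;> norm_num
  · obtain ⟨i, hi⟩ : ∃ i, ¬ (i ∈ A ↔ i ∈ B) := by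
      by_contra hc
      push Not at hc
      exact h (Finset.ext hc)
    refine Finset.prod_eq_zero (Finset.mem_univ i) ?_
    rw [Fintype.sum_bool]
    by_cases hA : i ∈ A <;> by_cases hB : i ∈ B <;> simp_all

/-- completeness -/
lemma kcW_complete {m : ℕ} (σ τ : Fin m → Bool) :
    ∑ B : Finset (Fin m), kcW B σ * kcW B τ = if σ = τ then 2 ^ m else 0 := by
  have h1 : ∑ B : Finset (Fin m), kcW B σ * kcW B τ = ∏ i, (rademacher i σ * rademacher i τ + 1) := by
    simp only [Finset.prod_add, Finset.prod_const_one, mul_one, Finset.powerset_univ, kcW,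
      Finset.prod_mul_distrib]
  rw [h1]
  split_ifs with h
  · subst h
    simp only [kc_rad_sq]
    norm_num
  · obtain ⟨i, hi⟩ : ∃ i, σ i ≠ τ i := by
      by_contra hc
      push Not at hc
      exact h (funext hc)
    refine Finset.prod_eq_zero (Finset.mem_univ i) ?_
    unfold rademacher
    cases h1 : σ i <;> cases h2 : τ i <;> simp_all

variable (X : Type u) [NormedAddCommGroup X] [NormedSpace ℝ X]

/-- the space `L²({-1,1}^m; X)` -/
abbrev KCY (m : ℕ) : Type u := PiLp 2 (fun _ : Fin m → Bool => X)

/-- operator given by a matrix -/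
noncomputable def kcOp {m : ℕ} (a : (Fin m → Bool) → (Fin m → Bool) → ℝ) : KCY X m →L[ℝ] KCY X m :=
  ((PiLp.continuousLinearEquiv 2 ℝ (fun _ : Fin m → Bool => X)).symm :
    ((Fin m → Bool) → X) →L[ℝ] KCY X m) ∘L
  ContinuousLinearMap.pi (fun σ => ∑ τ, a σ τ • PiLp.proj 2 (fun _ : Fin m → Bool => X) τ)

lemma kcOp_apply {m : ℕ} (a : (Fin m → Bool) → (Fin m → Bool) → ℝ) (f : KCY X m) (σ : Fin m → Bool) :
    kcOp X a f σ = ∑ τ, a σ τ • f τ := by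
  simp [kcOp]

/-- kernel of a Fourier multiplier -/
noncomputable def kcKer {m : ℕ} (φ : Finset (Fin m) → ℝ) (σ τ : Fin m → Bool) : ℝ :=
  (2 ^ m : ℝ)⁻¹ * ∑ B, φ B * (kcW B σ * kcW B τ)

lemma kcKer_mul {m : ℕ} (φ ψ : Finset (Fin m) → ℝ) (σ τ : Fin m → Bool) :
    kcKer (φ * ψ) σ τ = ∑ ρ, kcKer φ σ ρ * kcKer ψ ρ τ := by
  unfold kcKer
  have h : ∀ ρ : Fin m → Bool, (2 ^ m : ℝ)⁻¹ * (∑ B, φ B * (kcW B σ * kcW B ρ)) * ((2 ^ m : ℝ)⁻¹ * ∑ B, ψ B * (kcW B ρ * kcW B τ))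
      = ∑ A, ∑ B, (2 ^ m : ℝ)⁻¹ * (2 ^ m : ℝ)⁻¹ * (φ A * kcW A σ * ψ B * kcW B τ) * (kcW A ρ * kcW B ρ) := by
    intro ρ
    rw [mul_mul_mul_comm, Finset.sum_mul_sum, Finset.mul_sum]
    refine Finset.sum_congr rfl fun A _ => ?_
    rw [Finset.mul_sum]
    refine Finset.sum_congr rfl fun B _ => ?_
    ring
  simp only [h]
  rw [Finset.sum_comm, Finset.mul_sum]
  refine Finset.sum_congr rfl fun A _ => ?_
  rw [Finset.sum_comm]
  simp only [← Finset.mul_sum, kcW_orth]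
  rw [Finset.sum_eq_single A]
  · simp only [if_true, Pi.mul_apply]
    field_simp
  · intro B _ hB
    rw [if_neg hB.symm, mul_zero]
  · simp

/-- the Fourier multiplier algebra homomorphism -/
noncomputable def kcM (m : ℕ) : (Finset (Fin m) → ℝ) →ₐ[ℝ] (KCY X m →L[ℝ] KCY X m) :=
  AlgHom.ofLinearMap
    { toFun := fun φ => kcOp X (kcKer φ)
      map_add' := by
        intro φ ψ
        ext f σ
        simp only [kcOp_apply, add_apply, PiLp.add_apply, ← Finset.sum_add_distrib, ← add_smul]
        refine Finset.sum_congr rfl fun τ _ => ?_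
        congr 1
        simp only [kcKer, Pi.add_apply, add_mul, Finset.sum_add_distrib, mul_add]
      map_smul' := by
        intro c φ
        ext f σ
        simp only [kcOp_apply, smul_apply, PiLp.smul_apply, Finset.smul_sum, smul_smul, RingHom.id_apply]
        refine Finset.sum_congr rfl fun τ _ => ?_
        congr 1
        simp only [kcKer, Pi.smul_apply, smul_eq_mul, mul_assoc, ← Finset.mul_sum]
        ring }
    (by
      ext f σ
      simp only [LinearMap.coe_mk, AddHom.coe_mk, kcOp_apply, kcKer, Pi.one_apply, one_mul, kcW_complete]
      rw [Finset.sum_eq_single σ]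
      · simp
      · intro τ _ h; simp [h.symm]
      · simp)
    (by
      intro φ ψ
      ext f σ
      simp only [LinearMap.coe_mk, AddHom.coe_mk, kcOp_apply, kcKer_mul, mul_apply_eq_comp, Finset.smul_sum,
        Finset.sum_smul, smul_smul]
      rw [Finset.sum_comm])

lemma kcM_apply {m : ℕ} (φ : Finset (Fin m) → ℝ) (f : KCY X m) (σ : Fin m → Bool) :
    kcM X m φ f σ = ∑ τ, kcKer φ σ τ • f τ := kcOp_apply X _ f σ

/-- flip of a coordinate -/
def kcFlip {m : ℕ} (i : Fin m) (σ : Fin m → Bool) : Fin m → Bool := Function.update σ i (!σ i)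

lemma kcFlip_invol {m : ℕ} (i : Fin m) : Function.Involutive (kcFlip i) := by
  intro σ; simp [kcFlip]

lemma kcW_flip {m : ℕ} (i : Fin m) (B : Finset (Fin m)) (σ : Fin m → Bool) :
    kcW B (kcFlip i σ) = (if i ∈ B then -1 else 1) * kcW B σ := by
  have h : ∀ j, j ≠ i → rademacher j (kcFlip i σ) = rademacher j σ := by
    intro j hj; simp [rademacher, kcFlip, Function.update_of_ne hj]
  have hi : rademacher i (kcFlip i σ) = - rademacher i σ := by
    simp only [rademacher, kcFlip, Function.update_self]
    cases σ i <;> simp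
  unfold kcW
  split_ifs with hB
  · rw [← Finset.mul_prod_erase B _ hB, ← Finset.mul_prod_erase B _ hB, hi,
      Finset.prod_congr rfl (fun j hj => h j (Finset.ne_of_mem_erase hj))]
    ring
  · rw [one_mul]
    exact Finset.prod_congr rfl fun j hj => h j (fun e => hB (e ▸ hj))

lemma kcM_flip {m : ℕ} (i : Fin m) (f : KCY X m) (σ : Fin m → Bool) :
    kcM X m (fun B => if i ∈ B then -1 else 1) f σ = f (kcFlip i σ) := by
  rw [kcM_apply]
  have : ∀ τ, kcKer (fun B : Finset (Fin m) => if i ∈ B then (-1:ℝ) else 1) σ τ = if kcFlip i σ = τ then 1 else 0 := by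
    intro τ
    unfold kcKer
    simp only [← mul_assoc, ← kcW_flip, kcW_complete]
    split_ifs <;> simp
  simp [this]

lemma kcM_flip_norm {m : ℕ} (i : Fin m) :
    ‖kcM X m (fun B => if i ∈ B then -1 else 1)‖ ≤ 1 := by
  refine ContinuousLinearMap.opNorm_le_bound _ zero_le_one fun f => ?_
  rw [one_mul]
  refine le_of_eq ?_
  rw [PiLp.norm_eq_of_L2, PiLp.norm_eq_of_L2]
  congr 1
  simp only [kcM_flip]
  exact Equiv.sum_comp (kcFlip_invol i).toPerm (fun σ => ‖f σ‖ ^ 2)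

lemma kcM_one_norm {m : ℕ} : ‖(1 : KCY X m →L[ℝ] KCY X m)‖ ≤ 1 := ContinuousLinearMap.norm_id_le

lemma kcM_avg {m : ℕ} (i : Fin m) :
    ‖kcM X m (fun B => if i ∈ B then 0 else 1)‖ ≤ 1 := by
  have e : (fun B : Finset (Fin m) => if i ∈ B then (0:ℝ) else 1) =
      (1/2 : ℝ) • ((1 : Finset (Fin m) → ℝ) + fun B => if i ∈ B then (-1:ℝ) else 1) := by
    ext B
    simp only [Pi.smul_apply, Pi.add_apply, Pi.one_apply, smul_eq_mul]
    split_ifs <;> norm_num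
  rw [e, map_smul, map_add, map_one, norm_smul]
  have h1 := kcM_flip_norm X i
  have h2 := kcM_one_norm X (m := m)
  have h3 := norm_add_le (1 : KCY X m →L[ℝ] KCY X m) (kcM X m (fun B => if i ∈ B then -1 else 1))
  rw [Real.norm_of_nonneg (by norm_num)]
  linarith

/-- the conditional expectation multiplier -/
noncomputable def kcE {m : ℕ} (A : Finset (Fin m)) : Finset (Fin m) → ℝ :=
  ∏ i ∈ univ \ A, fun B => if i ∈ B then 0 else 1

lemma kcE_idem {m : ℕ} (A B : Finset (Fin m)) : kcE A B * kcE A B = kcE A B := by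
  simp only [kcE, Finset.prod_apply, ← Finset.prod_mul_distrib]
  refine Finset.prod_congr rfl fun i _ => ?_
  split_ifs <;> simp

lemma kcE_norm {m : ℕ} (A : Finset (Fin m)) : ‖kcM X m (kcE A)‖ ≤ 1 := by
  unfold kcE
  induction (univ \ A) using Finset.induction_on with
  | empty => rw [Finset.prod_empty, map_one]; exact kcM_one_norm X
  | insert a S ha ih =>
    rw [Finset.prod_insert ha, map_mul]
    exact (norm_mul_le _ _).trans (mul_le_one₀ (kcM_avg X a) (norm_nonneg _) ih)

lemma kcE_sum {m : ℕ} (s : ℝ) (B : Finset (Fin m)) :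
    s ^ (#B) = ∑ A : Finset (Fin m), s ^ (#A) * (1 - s) ^ (#(univ \ A)) * kcE A B := by
  have h : s ^ (#B) = ∏ i : Fin m, (s + (1 - s) * if i ∈ B then 0 else 1) := by
    have : ∀ i, (s + (1 - s) * if i ∈ B then (0:ℝ) else 1) = if i ∈ B then s else 1 := by
      intro i; split_ifs <;> ring
    simp only [this]
    rw [Finset.prod_ite_mem, Finset.univ_inter, Finset.prod_const]
  rw [h, Finset.prod_add, Finset.powerset_univ]
  refine Finset.sum_congr rfl fun A _ => ?_
  simp only [kcE, Finset.prod_apply, Finset.prod_mul_distrib, Finset.prod_const]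
  ring

lemma kcE_weights {m : ℕ} (s : ℝ) :
    ∑ A : Finset (Fin m), s ^ (#A) * (1 - s) ^ (#(univ \ A)) = 1 := by
  have := kcE_sum s (∅ : Finset (Fin m))
  simpa [kcE, Finset.prod_apply] using this.symm

end Cube
section Hard
variable (X : Type u) [NormedAddCommGroup X] [NormedSpace ℝ X]

lemma kcY_type {K : ℕ} (θ : ℝ)
    (hX : ∀ x : Fin K → X, ∑ ε : Fin K → Bool, ‖∑ i, rademacher i ε • x i‖ ^ 2 ≤
      2 ^ K * (θ * (K * ∑ i, ‖x i‖ ^ 2))) (m : ℕ) (x : Fin K → KCY X m) :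
    ∑ ε : Fin K → Bool, ‖∑ i, rademacher i ε • x i‖ ^ 2 ≤
      2 ^ K * (θ * (K * ∑ i, ‖x i‖ ^ 2)) := by
  simp only [PiLp.norm_sq_eq_of_L2]
  rw [Finset.sum_comm, Finset.sum_comm (s := (univ : Finset (Fin K)))]
  simp only [Finset.mul_sum]
  refine Finset.sum_le_sum fun σ _ => ?_
  have := hX (fun i => x i σ)
  simp only [Finset.mul_sum] at this
  simpa using this

lemma kcM_contr {m : ℕ} (s : ℝ) (hs0 : 0 ≤ s) (hs1 : s ≤ 1) :
    ‖kcM X m (fun B => s ^ (#B))‖ ≤ 1 := by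
  have e : (fun B : Finset (Fin m) => s ^ (#B)) =
      ∑ A : Finset (Fin m), (s ^ (#A) * (1 - s) ^ (#(univ \ A))) • kcE A := by
    ext B
    rw [kcE_sum, Finset.sum_apply]
    rfl
  rw [e, map_sum]
  refine le_trans ?_ (kcE_weights (m := m) s).le
  refine (norm_sum_le _ _).trans (Finset.sum_le_sum fun A _ => ?_)
  have h0 : 0 ≤ s ^ (#A) * (1 - s) ^ (#(univ \ A)) := by
    have : 0 ≤ 1 - s := by linarith
    positivity
  rw [map_smul, norm_smul, Real.norm_of_nonneg h0]
  exact mul_le_of_le_one_right h0 (kcE_norm X A)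

lemma kcM_pow {m K : ℕ} (hK : 1 ≤ K) (θ : ℝ) (hθ : θ < 1)
    (hX : ∀ x : Fin K → X, ∑ ε : Fin K → Bool, ‖∑ i, rademacher i ε • x i‖ ^ 2 ≤
      2 ^ K * (θ * (K * ∑ i, ‖x i‖ ^ 2))) (s : ℝ) (hs0 : 0 ≤ s) (hs1 : s ≤ 1) :
    ‖kcM X m (fun B => (1 - s ^ (#B)) ^ K)‖ ≤ 2 ^ K - min 1 ((1 - θ) / 2) := by
  set w : Finset (Fin m) → ℝ := fun A => s ^ (#A) * (1 - s) ^ (#(univ \ A)) with hw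
  have hw1 : ∑ A, w A = 1 := kcE_weights s
  have hw0 : ∀ A, 0 ≤ w A := fun A => by
    have : 0 ≤ 1 - s := by linarith
    simp only [hw]
    positivity
  have e : (fun B : Finset (Fin m) => (1 - s ^ (#B)) ^ K) =
      ∑ p : Fin K → Finset (Fin m), (∏ j, w (p j)) • ∏ j, (1 - kcE (p j)) := by
    have e1 : (fun B : Finset (Fin m) => (1 - s ^ (#B)) ^ K) =
        ∏ j : Fin K, ∑ A : Finset (Fin m), w A • (1 - kcE A) := by
      rw [Finset.prod_const, Finset.card_univ, Fintype.card_fin]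
      ext B
      rw [Pi.pow_apply, Finset.sum_apply]
      congr 1
      simp only [Pi.smul_apply, Pi.sub_apply, Pi.one_apply, smul_eq_mul, mul_sub, mul_one,
        Finset.sum_sub_distrib, hw1]
      rw [kcE_sum]
    rw [e1, Finset.prod_univ_sum, Fintype.piFinset_univ]
    refine Finset.sum_congr rfl fun p _ => ?_
    rw [Finset.prod_smul]
  have hsum : ∑ p : Fin K → Finset (Fin m), ∏ j, w (p j) = 1 := by
    have := Finset.prod_univ_sum (fun _ : Fin K => (univ : Finset (Finset (Fin m)))) (fun _ A => w A)
    rw [Fintype.piFinset_univ] at this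
    rw [← this]
    simp [hw1]
  rw [e, map_sum]
  calc _ ≤ ∑ p : Fin K → Finset (Fin m), (∏ j, w (p j)) * (2 ^ K - min 1 ((1 - θ) / 2)) := by
        refine (norm_sum_le _ _).trans (Finset.sum_le_sum fun p _ => ?_)
        have h0 : 0 ≤ ∏ j, w (p j) := Finset.prod_nonneg fun j _ => hw0 _
        rw [map_smul, norm_smul, Real.norm_of_nonneg h0]
        exact mul_le_mul_of_nonneg_left
          (kc_proj hK θ hθ (kcY_type X θ hX m) (kcM X m) (fun j => kcE (p j))
            (fun j B => kcE_idem _ _) (fun j => kcE_norm X _)) h0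
    _ = _ := by rw [← Finset.sum_mul, hsum, one_mul]

lemma kcM_rad {m : ℕ} (f : KCY X m) (σ : Fin m → Bool) :
    kcM X m (fun B => if #B = 1 then 1 else 0) f σ =
      ∑ k : Fin m, rademacher k σ • ((2 ^ m : ℝ)⁻¹ • ∑ τ : Fin m → Bool, rademacher k τ • f τ) := by
  have hk : ∀ τ, kcKer (fun B : Finset (Fin m) => if #B = 1 then (1:ℝ) else 0) σ τ =
      (2 ^ m : ℝ)⁻¹ * ∑ k, rademacher k σ * rademacher k τ := by
    intro τ
    unfold kcKer
    congr 1
    simp only [ite_mul, one_mul, zero_mul]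
    rw [← Finset.sum_filter]
    have : (univ.filter (fun B : Finset (Fin m) => #B = 1)) = univ.image (fun k : Fin m => ({k} : Finset (Fin m))) := by
      ext B
      simp [Finset.card_eq_one, eq_comm]
    rw [this, Finset.sum_image (fun a _ b _ h => Finset.singleton_injective h)]
    simp [kcW]
  rw [kcM_apply]
  simp only [hk, Finset.smul_sum, smul_smul, Finset.mul_sum, Finset.sum_smul]
  rw [Finset.sum_comm]
  refine Finset.sum_congr rfl fun k _ => Finset.sum_congr rfl fun τ _ => ?_
  congr 1
  ring

theorem kc_hard [CompleteSpace X] (h : ¬ ContainsL1nUniformly X) : KConvex X := by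
  unfold ContainsL1nUniformly at h
  simp only [not_forall] at h
  obtain ⟨K, hK, lam, hlam, hno⟩ := h
  obtain ⟨θ, hθ, hX⟩ := kc_type hK lam hlam hno
  obtain ⟨C, hC⟩ := kc_abstract.{u} K hK (min 1 ((1 - θ) / 2)) (lt_min one_pos (by linarith))
  refine ⟨C, fun n _ f => ?_⟩
  have hexp : ∀ (t : ℝ) (B : Finset (Fin n)), Real.exp (-(t * (#B : ℕ))) = Real.exp (-t) ^ (#B) := by
    intro t B
    rw [← Real.exp_nat_mul]
    congr 1
    ring
  have hb := hC (Finset (Fin n)) (KCY X n →L[ℝ] KCY X n) (kcM X n) (fun B => #B) (kcM_one_norm X)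
    (fun t ht => by
      simp only [hexp]
      exact kcM_contr X _ (Real.exp_pos _).le (Real.exp_le_one_iff.2 (by linarith)))
    (fun t ht => by
      simp only [hexp]
      exact kcM_pow X hK θ hθ hX _ (Real.exp_pos _).le (Real.exp_le_one_iff.2 (by linarith)))
  have h1 := (kcM X n (fun B => if #B = 1 then 1 else 0)).le_of_opNorm_le hb (WithLp.toLp 2 f)
  rw [PiLp.norm_eq_of_L2, PiLp.norm_eq_of_L2] at h1
  simp only [kcM_rad] at h1
  rw [Real.sqrt_mul (by positivity), Real.sqrt_mul (by positivity), mul_left_comm]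
  exact mul_le_mul_of_nonneg_left h1 (Real.sqrt_nonneg _)
end Hard

theorem kconvex_iff_not_contains_l1n {X : Type*} [NormedAddCommGroup X] [NormedSpace ℝ X]
    [CompleteSpace X] :
    KConvex X ↔ ¬ ContainsL1nUniformly X :=
  ⟨fun h hc => kc_easy h hc, kc_hard X⟩
end

section
/- Let m ≥ 1 be an integer and let a : Fin m × Fin m → ℝ. The following are equivalent: (1) for every t ≥ 0 and every matrix B ∈ M_m(ℂ), the entrywise (Hadamard–Schur) product of [e^{−t·a(i,j)}]_{i,j} with B satisfies ‖[e^{−t·a(i,j)} B_{ij}]‖ ≤ ‖B‖, where ‖·‖ is the operator norm of a matrix acting on ℓ²(Fin m); (2) there exist a real inner product space H and families (α_i)_{i∈Fin m} and (β_j)_{j∈Fin m} in H such that a(i,j) = ‖α_i − β_j‖²_H for all i, j. -/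
open Matrix

/-- The operator norm of a complex `m × m` matrix acting on `ℓ²(Fin m)`. -/
noncomputable def matrixOpNorm {m : ℕ} (B : Matrix (Fin m) (Fin m) ℂ) : ℝ :=
  ‖(Matrix.toEuclideanCLM (𝕜 := ℂ) (n := Fin m) B :
      EuclideanSpace ℂ (Fin m) →L[ℂ] EuclideanSpace ℂ (Fin m))‖

/-- A representation of `a : Fin m × Fin m → ℝ` as squared distances `‖α_i - β_j‖²` between
two families of points of a real inner product space. -/
structure SqDistInnerRepr {m : ℕ} (a : Fin m × Fin m → ℝ) where
  H : Type
  [normedAddCommGroup : NormedAddCommGroup H]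
  [innerProductSpace : InnerProductSpace ℝ H]
  α : Fin m → H
  β : Fin m → H
  repr : ∀ i j : Fin m, a (i, j) = ‖α i - β j‖ ^ 2


open scoped MatrixOrder in
lemma psd_gram {n : Type} [Fintype n] [DecidableEq n] {G : Matrix n n ℝ} (h : G.PosSemidef) :
    ∃ v : n → EuclideanSpace ℝ n, ∀ i j, G i j = inner ℝ (v i) (v j) := by
  obtain ⟨A, hA⟩ := CStarAlgebra.nonneg_iff_eq_star_mul_self.mp (Matrix.nonneg_iff_posSemidef.mpr h)
  refine ⟨fun i => WithLp.toLp 2 (fun k => A k i), fun i j => ?_⟩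
  rw [hA]
  simp [Matrix.mul_apply, Matrix.star_apply, PiLp.inner_apply, mul_comm]

lemma bilin_le {m : ℕ} (B : Matrix (Fin m) (Fin m) ℂ) (z x : Fin m → ℂ) :
    ‖∑ i, ∑ j, z i * B i j * x j‖ ≤
      matrixOpNorm B * Real.sqrt (∑ i, ‖z i‖ ^ 2) * Real.sqrt (∑ i, ‖x i‖ ^ 2) := by
  have h1 := (Matrix.toEuclideanCLM (𝕜 := ℂ) (n := Fin m) B).le_opNorm (WithLp.toLp 2 x)
  have h2 := norm_inner_le_norm (𝕜 := ℂ) (WithLp.toLp 2 (fun i => star (z i)))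
    (Matrix.toEuclideanCLM (𝕜 := ℂ) (n := Fin m) B (WithLp.toLp 2 x))
  have h3 : inner ℂ (WithLp.toLp 2 (fun i => star (z i)))
    (Matrix.toEuclideanCLM (𝕜 := ℂ) (n := Fin m) B (WithLp.toLp 2 x)) =
      ∑ i, ∑ j, z i * B i j * x j := by
    simp only [PiLp.inner_apply, Matrix.toEuclideanCLM_toLp, Matrix.mulVec, dotProduct]
    refine Finset.sum_congr rfl fun i _ => ?_
    simp [Finset.sum_mul, Finset.mul_sum]
    refine Finset.sum_congr rfl fun j _ => by ring
  rw [h3] at h2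
  refine h2.trans ?_
  have e1 : ‖(WithLp.toLp 2 (fun i => star (z i)) : EuclideanSpace ℂ (Fin m))‖ =
      Real.sqrt (∑ i, ‖z i‖ ^ 2) := by simp [EuclideanSpace.norm_eq]
  have e2 : ‖(WithLp.toLp 2 x : EuclideanSpace ℂ (Fin m))‖ =
      Real.sqrt (∑ i, ‖x i‖ ^ 2) := by simp [EuclideanSpace.norm_eq]
  rw [e2] at h1
  rw [e1]
  calc _ ≤ Real.sqrt (∑ i, ‖z i‖ ^ 2) * (matrixOpNorm B * Real.sqrt (∑ i, ‖x i‖ ^ 2)) := by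
        gcongr; exact h1
    _ = _ := by ring

lemma opNorm_le_one_of_real {m : ℕ} (B : Fin m → Fin m → ℝ)
    (h : ∀ p q : Fin m → ℝ, 2 * ∑ i, ∑ j, p i * B i j * q j ≤ ∑ i, p i ^ 2 + ∑ j, q j ^ 2) :
    matrixOpNorm (Matrix.of fun i j => (B i j : ℂ)) ≤ 1 := by
  refine ContinuousLinearMap.opNorm_le_bound _ zero_le_one fun x => ?_
  rw [one_mul]
  set y := (Matrix.toEuclideanCLM (𝕜 := ℂ) (n := Fin m) (Matrix.of fun i j => (B i j : ℂ))) x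
    with hy
  have hyi : ∀ i, y i = ∑ j, (B i j : ℂ) * x j := fun i => by
    rw [hy, Matrix.ofLp_toEuclideanCLM]; rfl
  have hre : ∀ i, (y i).re = ∑ j, B i j * (x j).re := fun i => by simp [hyi]
  have him : ∀ i, (y i).im = ∑ j, B i j * (x j).im := fun i => by simp [hyi]
  have key1 := h (fun i => (y i).re) (fun i => (x i).re)
  have key2 := h (fun i => (y i).im) (fun i => (x i).im)
  have f1 : ∑ i, ∑ j, (y i).re * B i j * (x j).re = ∑ i, (y i).re ^ 2 := by
    refine Finset.sum_congr rfl fun i _ => ?_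
    simp_rw [mul_assoc]
    rw [← Finset.mul_sum, ← hre, sq]
  have f2 : ∑ i, ∑ j, (y i).im * B i j * (x j).im = ∑ i, (y i).im ^ 2 := by
    refine Finset.sum_congr rfl fun i _ => ?_
    simp_rw [mul_assoc]
    rw [← Finset.mul_sum, ← him, sq]
  simp only [f1] at key1
  simp only [f2] at key2
  have hn : ∀ v : EuclideanSpace ℂ (Fin m), ‖v‖ ^ 2 = ∑ i, (v i).re ^ 2 + ∑ i, (v i).im ^ 2 := by
    intro v
    rw [EuclideanSpace.norm_sq_eq, ← Finset.sum_add_distrib]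
    refine Finset.sum_congr rfl fun i _ => ?_
    rw [Complex.sq_norm, Complex.normSq_apply]; ring
  refine le_of_sq_le_sq ?_ (norm_nonneg _)
  rw [hn, hn]
  linarith

open MeasureTheory ProbabilityTheory in
lemma gauss_contractive {m n : ℕ} (α β : Fin m → EuclideanSpace ℝ (Fin n)) (t : ℝ) (ht : 0 ≤ t)
    (B : Matrix (Fin m) (Fin m) ℂ) :
    matrixOpNorm (Matrix.of fun i j => (Real.exp (-t * ‖α i - β j‖ ^ 2) : ℂ) * B i j)
          ≤ matrixOpNorm B := by
  have hB0 : 0 ≤ matrixOpNorm B := norm_nonneg _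
  refine ContinuousLinearMap.opNorm_le_bound _ hB0 fun x => ?_
  set M := (Matrix.of fun i j => (Real.exp (-t * ‖α i - β j‖ ^ 2) : ℂ) * B i j) with hM
  set y := (Matrix.toEuclideanCLM (𝕜 := ℂ) (n := Fin m) M) x with hy
  have hyi : ∀ i, y i = ∑ j, M i j * x j := fun i => by
    rw [hy, Matrix.ofLp_toEuclideanCLM]; rfl
  set c := Real.sqrt (2 * t) with hc
  let e : EuclideanSpace ℝ (Fin n) → EuclideanSpace ℝ (Fin n) → ℂ :=
    fun u g => Complex.exp (((inner ℝ g (c • u) : ℝ) : ℂ) * Complex.I)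
  have he : ∀ u g, ‖e u g‖ = 1 := fun u g => Complex.norm_exp_ofReal_mul_I _
  have hei : ∀ u, Integrable (e u) (stdGaussian (EuclideanSpace ℝ (Fin n))) := fun u => by
    refine Integrable.of_bound (C := 1) (Continuous.aestronglyMeasurable ?_) ?_
    · fun_prop
    · exact Filter.Eventually.of_forall fun g => (he u g).le
  have hadd : ∀ u v g, e (u - v) g = e u g * e (-v) g := fun u v g => by
    simp only [e, ← Complex.exp_add]
    congr 1
    rw [sub_eq_add_neg, smul_add, inner_add_right]; push_cast; ring
  have hint : ∀ u, ∫ g, e u g ∂(stdGaussian (EuclideanSpace ℝ (Fin n))) =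
      (Real.exp (-t * ‖u‖ ^ 2) : ℂ) := fun u => by
    have := charFun_stdGaussian (c • u)
    rw [charFun_apply] at this
    rw [this, norm_smul, Real.norm_of_nonneg (Real.sqrt_nonneg _)]
    have h2 : ((c : ℂ)) ^ 2 = 2 * t := by
      rw [hc, ← Complex.ofReal_pow, Real.sq_sqrt (by positivity)]; push_cast; rfl
    rw [Complex.ofReal_exp]
    congr 1
    push_cast
    rw [mul_pow, h2]; ring
  have hI : ∫ g, (∑ i, ∑ j, (star (y i) * e (α i) g) * B i j * (e (-β j) g * x j))
      ∂(stdGaussian (EuclideanSpace ℝ (Fin n))) = ∑ i, star (y i) * y i := by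
    have : ∀ g, (∑ i, ∑ j, (star (y i) * e (α i) g) * B i j * (e (-β j) g * x j)) =
        ∑ i, ∑ j, (star (y i) * B i j * x j) * e (α i - β j) g := fun g => by
      refine Finset.sum_congr rfl fun i _ => Finset.sum_congr rfl fun j _ => ?_
      rw [hadd]; ring
    simp_rw [this]
    rw [integral_finsetSum _ fun i _ => integrable_finsetSum _ fun j _ => (hei _).const_mul _]
    refine Finset.sum_congr rfl fun i _ => ?_
    rw [integral_finsetSum _ fun j _ => (hei _).const_mul _, hyi i, Finset.mul_sum]
    refine Finset.sum_congr rfl fun j _ => ?_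
    rw [integral_const_mul, hint, ← hyi i, hM, Matrix.of_apply]; ring
  have hb : ∀ g, ‖∑ i, ∑ j, (star (y i) * e (α i) g) * B i j * (e (-β j) g * x j)‖ ≤
      matrixOpNorm B * ‖y‖ * ‖x‖ := fun g => by
    refine (bilin_le B _ _).trans (le_of_eq ?_)
    rw [EuclideanSpace.norm_eq, EuclideanSpace.norm_eq]
    simp [he]
  have h3 := norm_integral_le_of_norm_le_const
    (μ := stdGaussian (EuclideanSpace ℝ (Fin n))) (Filter.Eventually.of_forall hb)
  rw [hI] at h3
  have h4 : ‖∑ i, star (y i) * y i‖ = ‖y‖ ^ 2 := by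
    have : ∑ i, star (y i) * y i = ((‖y‖ ^ 2 : ℝ) : ℂ) := by
      rw [EuclideanSpace.norm_sq_eq]
      push_cast
      refine Finset.sum_congr rfl fun i _ => ?_
      rw [← Complex.conj_mul']; rfl
    rw [this, Complex.norm_real]; simp
  rw [h4] at h3
  simp at h3
  by_cases hy0 : ‖y‖ = 0
  · rw [hy0]; positivity
  · have : 0 < ‖y‖ := lt_of_le_of_ne (norm_nonneg _) (Ne.symm hy0)
    nlinarith

lemma backward {m : ℕ} (a : Fin m × Fin m → ℝ) (r : SqDistInnerRepr a) (t : ℝ) (ht : 0 ≤ t)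
    (B : Matrix (Fin m) (Fin m) ℂ) :
    matrixOpNorm (Matrix.of fun i j => (Real.exp (-t * a (i, j)) : ℂ) * B i j)
          ≤ matrixOpNorm B := by
  obtain ⟨H, α, β, hr⟩ := r
  rename_i i1 i2
  let S : Submodule ℝ H := Submodule.span ℝ (Set.range α ∪ Set.range β)
  haveI : FiniteDimensional ℝ S :=
    FiniteDimensional.span_of_finite ℝ ((Set.finite_range α).union (Set.finite_range β))
  let b := stdOrthonormalBasis ℝ S
  let αS : Fin m → S := fun i => ⟨α i, Submodule.subset_span (Or.inl ⟨i, rfl⟩)⟩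
  let βS : Fin m → S := fun i => ⟨β i, Submodule.subset_span (Or.inr ⟨i, rfl⟩)⟩
  have := gauss_contractive (fun i => b.repr (αS i)) (fun i => b.repr (βS i)) t ht B
  have h : ∀ i j, ‖b.repr (αS i) - b.repr (βS j)‖ ^ 2 = a (i, j) := fun i j => by
    rw [← map_sub, LinearIsometryEquiv.norm_map, hr]; rfl
  simp_rw [h] at this
  exact this

lemma quad_expand {m : ℕ} (C : Fin m → Fin m → ℝ) (p q : Fin m → ℝ) :
    ∑ i, ∑ j, C i j * (p i - q j) ^ 2 =
      ∑ i, (∑ j, C i j) * p i ^ 2 + ∑ j, (∑ i, C i j) * q j ^ 2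
        - 2 * ∑ i, ∑ j, p i * C i j * q j := by
  have : ∑ j, (∑ i, C i j) * q j ^ 2 = ∑ i, ∑ j, C i j * q j ^ 2 := by
    simp_rw [Finset.sum_mul]; rw [Finset.sum_comm]
  rw [this, Finset.mul_sum, ← Finset.sum_add_distrib, ← Finset.sum_sub_distrib]
  refine Finset.sum_congr rfl fun i _ => ?_
  rw [Finset.sum_mul, Finset.mul_sum, ← Finset.sum_add_distrib, ← Finset.sum_sub_distrib]
  refine Finset.sum_congr rfl fun j _ => by ring

lemma real_bilin_le {m : ℕ} (M : Fin m → Fin m → ℝ)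
    (h : matrixOpNorm (Matrix.of fun i j => (M i j : ℂ)) ≤ 1) (u v : Fin m → ℝ) :
    ∑ i, ∑ j, u i * M i j * v j ≤ Real.sqrt (∑ i, u i ^ 2) * Real.sqrt (∑ i, v i ^ 2) := by
  have h1 := bilin_le (Matrix.of fun i j => (M i j : ℂ)) (fun i => (u i : ℂ)) (fun i => (v i : ℂ))
  have h2 : ∑ i, ∑ j, (u i : ℂ) * (Matrix.of fun i j => (M i j : ℂ)) i j * (v j : ℂ) =
      ((∑ i, ∑ j, u i * M i j * v j : ℝ) : ℂ) := by
    simp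
  simp only [h2, Complex.norm_real, Real.norm_eq_abs, sq_abs] at h1
  refine (le_abs_self _).trans (h1.trans ?_)
  rw [mul_assoc]
  exact mul_le_of_le_one_left (by positivity) h

lemma exp_le_of_dual {m : ℕ} (a : Fin m × Fin m → ℝ) (t : ℝ)
    (h : ∀ B : Matrix (Fin m) (Fin m) ℂ,
        matrixOpNorm (Matrix.of fun i j => (Real.exp (-t * a (i, j)) : ℂ) * B i j)
          ≤ matrixOpNorm B)
    (C : Fin m → Fin m → ℝ) (hr : ∀ i, 0 < ∑ j, C i j) (hs : ∀ j, 0 < ∑ i, C i j)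
    (hC : ∀ p q : Fin m → ℝ, 0 ≤ ∑ i, ∑ j, C i j * (p i - q j) ^ 2) :
    ∑ i, ∑ j, C i j * Real.exp (-t * a (i, j)) ≤ ∑ i, ∑ j, C i j := by
  let r : Fin m → ℝ := fun i => Real.sqrt (∑ j, C i j)
  let s : Fin m → ℝ := fun j => Real.sqrt (∑ i, C i j)
  have hr0 : ∀ i, 0 < r i := fun i => Real.sqrt_pos.2 (hr i)
  have hs0 : ∀ i, 0 < s i := fun i => Real.sqrt_pos.2 (hs i)
  have hr2 : ∀ i, r i ^ 2 = ∑ j, C i j := fun i => Real.sq_sqrt (hr i).le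
  have hs2 : ∀ j, s j ^ 2 = ∑ i, C i j := fun j => Real.sq_sqrt (hs j).le
  let B : Fin m → Fin m → ℝ := fun i j => C i j / (r i * s j)
  have hB : matrixOpNorm (Matrix.of fun i j => (B i j : ℂ)) ≤ 1 := by
    apply opNorm_le_one_of_real
    intro p q
    have := hC (fun i => p i / r i) (fun j => q j / s j)
    rw [quad_expand] at this
    simp_rw [← hr2, ← hs2] at this
    have e1 : ∀ i, r i ^ 2 * (p i / r i) ^ 2 = p i ^ 2 := fun i => by
      have := (hr0 i).ne'; field_simp
    have e2 : ∀ i, s i ^ 2 * (q i / s i) ^ 2 = q i ^ 2 := fun i => by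
      have := (hs0 i).ne'; field_simp
    have e3 : ∀ i j, p i / r i * C i j * (q j / s j) = p i * B i j * q j := fun i j => by
      have := (hr0 i).ne'; have := (hs0 j).ne'; simp only [B]; field_simp
    simp_rw [e1, e2, e3] at this
    linarith
  have h1 := (h _).trans hB
  have h2 := real_bilin_le (fun i j => Real.exp (-t * a (i, j)) * B i j)
    (by simpa only [Complex.ofReal_mul, Matrix.of_apply] using h1) r s
  have e4 : ∀ i j, r i * (Real.exp (-t * a (i, j)) * B i j) * s j =
      C i j * Real.exp (-t * a (i, j)) := fun i j => by
    have := (hr0 i).ne'; have := (hs0 j).ne'; simp only [B]; field_simp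
  simp_rw [e4, hr2, hs2] at h2
  rw [Finset.sum_comm (f := fun j i => C i j)] at h2
  rwa [Real.mul_self_sqrt (Finset.sum_nonneg fun i _ => (hr i).le)] at h2

lemma dual_nonneg {m : ℕ} (a : Fin m × Fin m → ℝ)
    (h : ∀ t : ℝ, 0 ≤ t → ∀ B : Matrix (Fin m) (Fin m) ℂ,
        matrixOpNorm (Matrix.of fun i j => (Real.exp (-t * a (i, j)) : ℂ) * B i j)
          ≤ matrixOpNorm B)
    (C : Fin m → Fin m → ℝ) (hr : ∀ i, 0 < ∑ j, C i j) (hs : ∀ j, 0 < ∑ i, C i j)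
    (hC : ∀ p q : Fin m → ℝ, 0 ≤ ∑ i, ∑ j, C i j * (p i - q j) ^ 2) :
    0 ≤ ∑ i, ∑ j, C i j * a (i, j) := by
  let F : ℝ → ℝ := fun t => ∑ i, ∑ j, C i j * Real.exp (-t * a (i, j))
  have hd : HasDerivAt F (∑ i, ∑ j, C i j * (-a (i, j))) 0 := by
    refine HasDerivAt.fun_sum fun i _ => HasDerivAt.fun_sum fun j _ => ?_
    refine HasDerivAt.const_mul _ ?_
    have := ((hasDerivAt_neg (0 : ℝ)).mul_const (a (i, j))).exp
    simpa using this
  have hle : ∀ t, 0 ≤ t → F t ≤ F 0 := fun t ht => by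
    refine (exp_le_of_dual a t (h t ht) C hr hs hC).trans (le_of_eq ?_)
    simp [F]
  have h2 := (hasDerivWithinAt_iff_tendsto_slope' (s := Set.Ioi 0) (by simp)).1
    (hd.hasDerivWithinAt (s := Set.Ioi 0))
  have h3 : ∑ i, ∑ j, C i j * (-a (i, j)) ≤ 0 := by
    refine le_of_tendsto h2 ?_
    filter_upwards [self_mem_nhdsWithin] with t ht
    rw [slope_def_field]
    have := hle t (le_of_lt ht)
    exact div_nonpos_of_nonpos_of_nonneg (by linarith) (by simpa using (le_of_lt ht))
  simp only [mul_neg, Finset.sum_neg_distrib] at h3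
  linarith

lemma a_nonneg {m : ℕ} (a : Fin m × Fin m → ℝ)
    (h : ∀ t : ℝ, 0 ≤ t → ∀ B : Matrix (Fin m) (Fin m) ℂ,
        matrixOpNorm (Matrix.of fun i j => (Real.exp (-t * a (i, j)) : ℂ) * B i j)
          ≤ matrixOpNorm B) (i j : Fin m) : 0 ≤ a (i, j) := by
  let B : Fin m → Fin m → ℝ := fun k l => if k = i then (if l = j then 1 else 0) else 0
  have hB : matrixOpNorm (Matrix.of fun i j => (B i j : ℂ)) ≤ 1 := by
    apply opNorm_le_one_of_real
    intro p q
    have e : ∑ k, ∑ l, p k * B k l * q l = p i * q j := by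
      simp [B]
    rw [e]
    have h1 := Finset.single_le_sum (f := fun k => p k ^ 2) (fun k _ => sq_nonneg _)
      (Finset.mem_univ i)
    have h2 := Finset.single_le_sum (f := fun k => q k ^ 2) (fun k _ => sq_nonneg _)
      (Finset.mem_univ j)
    nlinarith [sq_nonneg (p i - q j)]
  have h1 := (h 1 zero_le_one _).trans hB
  have h2 := real_bilin_le (fun i j => Real.exp (-1 * a (i, j)) * B i j)
    (by simpa only [Complex.ofReal_mul, Matrix.of_apply] using h1) (fun k => if k = i then 1 else 0) (fun l => if l = j then 1 else 0)
  simp [B] at h2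
  exact h2

def gramMap {m : ℕ} (G : Matrix (Fin m ⊕ Fin m) (Fin m ⊕ Fin m) ℝ) : Fin m × Fin m → ℝ :=
  fun x => G (.inl x.1) (.inl x.1) + G (.inr x.2) (.inr x.2) - 2 * G (.inl x.1) (.inr x.2)

def gramSet {m : ℕ} (i0 : Fin m) : Set (Matrix (Fin m ⊕ Fin m) (Fin m ⊕ Fin m) ℝ) :=
  {G | G.PosSemidef ∧ G (.inl i0) (.inl i0) = 0 ∧ ∑ x, gramMap G x = 1}

lemma gramMap_eq {m : ℕ} {G : Matrix (Fin m ⊕ Fin m) (Fin m ⊕ Fin m) ℝ} {n : Type} [Fintype n]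
    {v : Fin m ⊕ Fin m → EuclideanSpace ℝ n} (hv : ∀ i j, G i j = inner ℝ (v i) (v j))
    (x : Fin m × Fin m) : gramMap G x = ‖v (.inl x.1) - v (.inr x.2)‖ ^ 2 := by
  rw [norm_sub_sq_real]
  simp only [gramMap, hv, real_inner_self_eq_norm_sq]
  ring

lemma gramMap_cont {m : ℕ} : Continuous (gramMap (m := m)) := by
  unfold gramMap; fun_prop

lemma gramSet_convex {m : ℕ} (i0 : Fin m) : Convex ℝ (gramSet i0) := by
  intro G hG G' hG' s t hs ht hst
  refine ⟨(hG.1.smul hs).add (hG'.1.smul ht), ?_, ?_⟩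
  · simp [hG.2.1, hG'.2.1]
  · have : ∀ x, gramMap (s • G + t • G') x = s * gramMap G x + t * gramMap G' x := fun x => by
      simp [gramMap]; ring
    simp_rw [this, Finset.sum_add_distrib, ← Finset.mul_sum, hG.2.2, hG'.2.2]
    linarith

lemma gramSet_compact {m : ℕ} (i0 : Fin m) : IsCompact (gramSet i0) := by
  have hsub : gramSet i0 ⊆ Set.pi Set.univ (fun _ => Set.pi Set.univ fun _ => Set.Icc (-4 : ℝ) 4) := by
    rintro G ⟨hG, h0, h1⟩
    obtain ⟨v, hv⟩ := psd_gram hG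
    have hx : ∀ x, gramMap G x ≤ 1 := fun x => by
      rw [← h1]
      exact Finset.single_le_sum (f := fun x => gramMap G x)
        (fun x _ => by rw [gramMap_eq hv]; positivity) (Finset.mem_univ x)
    have hv0 : v (.inl i0) = 0 := by
      rw [hv] at h0; exact inner_self_eq_zero.1 h0
    have hd : ∀ i j, ‖v (.inl i) - v (.inr j)‖ ≤ 1 := fun i j => by
      have := hx (i, j)
      rw [gramMap_eq hv] at this
      nlinarith [norm_nonneg (v (.inl i) - v (.inr j))]
    have hb : ∀ j, ‖v (.inr j)‖ ≤ 1 := fun j => by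
      have := hd i0 j
      rwa [hv0, zero_sub, norm_neg] at this
    have hv2 : ∀ u, ‖v u‖ ≤ 2 := by
      rintro (i | j)
      · have h1 := norm_add_le (v (.inl i) - v (.inr i0)) (v (.inr i0))
        rw [sub_add_cancel] at h1
        linarith [hd i i0, hb i0]
      · linarith [hb j]
    intro u _ w _
    rw [hv, Set.mem_Icc, ← abs_le]
    refine (abs_real_inner_le_norm _ _).trans ?_
    nlinarith [hv2 u, hv2 w, norm_nonneg (v u), norm_nonneg (v w)]
  refine IsCompact.of_isClosed_subset
    (isCompact_univ_pi fun _ => isCompact_univ_pi fun _ => isCompact_Icc) ?_ hsub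
  have : gramSet i0 = {G | Gᴴ = G} ∩ (⋂ x : (Fin m ⊕ Fin m) → ℝ, {G | 0 ≤ star x ⬝ᵥ (G *ᵥ x)}) ∩
      {G | G (.inl i0) (.inl i0) = 0} ∩ {G | ∑ x, gramMap G x = 1} := by
    ext G
    simp only [gramSet, Matrix.posSemidef_iff_dotProduct_mulVec, Matrix.IsHermitian,
      Set.mem_inter_iff, Set.mem_iInter, Set.mem_ofPred_eq, and_assoc]
  rw [this]
  refine IsClosed.inter (IsClosed.inter (IsClosed.inter ?_ (isClosed_iInter fun x => ?_)) ?_) ?_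
  · exact isClosed_eq (by fun_prop) continuous_id
  · exact isClosed_le continuous_const (by fun_prop)
  · exact isClosed_eq (by fun_prop) continuous_const
  · exact isClosed_eq (continuous_finsetSum _ fun x _ =>
      (continuous_apply x).comp gramMap_cont) continuous_const

lemma gramImage_convex {m : ℕ} (i0 : Fin m) : Convex ℝ (Set.image gramMap (gramSet i0)) := by
  rintro _ ⟨G, hG, rfl⟩ _ ⟨G', hG', rfl⟩ s t hs ht hst
  refine ⟨_, gramSet_convex i0 hG hG' hs ht hst, ?_⟩
  ext x
  simp [gramMap]; ring

lemma rank_one_mem {m : ℕ} (i0 : Fin m) (p q : Fin m → ℝ) (h : 0 < ∑ i, ∑ j, (p i - q j) ^ 2) :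
    (fun x : Fin m × Fin m => (∑ i, ∑ j, (p i - q j) ^ 2)⁻¹ * (p x.1 - q x.2) ^ 2) ∈
      Set.image gramMap (gramSet i0) := by
  set σ := ∑ i, ∑ j, (p i - q j) ^ 2 with hσ
  let w : Fin m ⊕ Fin m → ℝ := Sum.elim (fun i => (p i - p i0) / Real.sqrt σ)
    (fun j => (q j - p i0) / Real.sqrt σ)
  have hs : Real.sqrt σ ^ 2 = σ := Real.sq_sqrt h.le
  have e : gramMap (Matrix.vecMulVec w (star w)) =
      fun x : Fin m × Fin m => σ⁻¹ * (p x.1 - q x.2) ^ 2 := by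
    ext x
    have : Real.sqrt σ ≠ 0 := (Real.sqrt_pos.2 h).ne'
    have e1 : σ⁻¹ = (Real.sqrt σ)⁻¹ ^ 2 := by rw [inv_pow, hs]
    rw [e1]
    simp only [gramMap, Matrix.vecMulVec_apply, w, Sum.elim_inl, Sum.elim_inr, Pi.star_apply,
      star_trivial]
    field_simp
    ring
  refine ⟨Matrix.vecMulVec w (star w), ⟨Matrix.posSemidef_vecMulVec_self_star w, ?_, ?_⟩, e⟩
  · simp [Matrix.vecMulVec_apply, w]
  · rw [e, ← Finset.mul_sum, Fintype.sum_prod_type]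
    exact inv_mul_cancel₀ h.ne'

lemma mem_gramImage {m : ℕ} (i0 : Fin m) (a : Fin m × Fin m → ℝ)
    (h : ∀ t : ℝ, 0 ≤ t → ∀ B : Matrix (Fin m) (Fin m) ℂ,
        matrixOpNorm (Matrix.of fun i j => (Real.exp (-t * a (i, j)) : ℂ) * B i j)
          ≤ matrixOpNorm B) (ha : 0 < ∑ x, a x) :
    (∑ x, a x)⁻¹ • a ∈ Set.image gramMap (gramSet i0) := by
  by_contra hn
  obtain ⟨f, u, h1, h2⟩ := geometric_hahn_banach_point_closed (gramImage_convex i0)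
    ((gramSet_compact i0).image gramMap_cont).isClosed hn
  have hf : ∀ k : Fin m × Fin m → ℝ, f k = ∑ i, ∑ j, f (Pi.single (i, j) 1) * k (i, j) := fun k => by
    rw [← Fintype.sum_prod_type (f := fun x => f (Pi.single x 1) * k x)]
    conv_lhs => rw [pi_eq_sum_univ' k]
    rw [map_sum]
    refine Finset.sum_congr rfl fun x _ => ?_
    rw [map_smul, smul_eq_mul, mul_comm]
  let C : Fin m → Fin m → ℝ := fun i j => f (Pi.single (i, j) 1) - u
  have hCk : ∀ k : Fin m × Fin m → ℝ, ∑ i, ∑ j, C i j * k (i, j) = f k - u * ∑ x, k x := fun k => by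
    rw [hf k, Fintype.sum_prod_type, Finset.mul_sum, ← Finset.sum_sub_distrib]
    refine Finset.sum_congr rfl fun i _ => ?_
    rw [Finset.mul_sum, ← Finset.sum_sub_distrib]
    refine Finset.sum_congr rfl fun j _ => by simp only [C]; ring
  have hpos : ∀ p q : Fin m → ℝ, 0 < ∑ i, ∑ j, (p i - q j) ^ 2 →
      0 < ∑ i, ∑ j, C i j * (p i - q j) ^ 2 := fun p q hpq => by
    have h3 := h2 _ (rank_one_mem i0 p q hpq)
    have h4 := hCk (fun x : Fin m × Fin m =>
      (∑ i, ∑ j, (p i - q j) ^ 2)⁻¹ * (p x.1 - q x.2) ^ 2)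
    rw [← Finset.mul_sum, Fintype.sum_prod_type] at h4
    simp only at h4
    rw [inv_mul_cancel₀ hpq.ne', mul_one] at h4
    have h5 : ∑ i, ∑ j, C i j * ((∑ i, ∑ j, (p i - q j) ^ 2)⁻¹ * (p i - q j) ^ 2) =
        (∑ i, ∑ j, (p i - q j) ^ 2)⁻¹ * ∑ i, ∑ j, C i j * (p i - q j) ^ 2 := by
      rw [Finset.mul_sum]
      refine Finset.sum_congr rfl fun i _ => ?_
      rw [Finset.mul_sum]
      refine Finset.sum_congr rfl fun j _ => by ring
    rw [h5] at h4
    have h6 : 0 < (∑ i, ∑ j, (p i - q j) ^ 2)⁻¹ * ∑ i, ∑ j, C i j * (p i - q j) ^ 2 := by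
      rw [h4]; linarith
    exact (pos_iff_pos_of_mul_pos h6).1 (inv_pos.2 hpq)
  have hnn : ∀ p q : Fin m → ℝ, 0 ≤ ∑ i, ∑ j, C i j * (p i - q j) ^ 2 := fun p q => by
    rcases (Finset.sum_nonneg fun i _ => Finset.sum_nonneg fun j _ => sq_nonneg (p i - q j) :
      0 ≤ ∑ i, ∑ j, (p i - q j) ^ 2).lt_or_eq with h3 | h3
    · exact (hpos p q h3).le
    · have h4 : ∀ i j, (p i - q j) ^ 2 = 0 := fun i j => by
        have h5 := (Finset.sum_eq_zero_iff_of_nonneg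
          (fun i _ => Finset.sum_nonneg fun j _ => sq_nonneg (p i - q j))).1 h3.symm i
          (Finset.mem_univ i)
        exact (Finset.sum_eq_zero_iff_of_nonneg (fun j _ => sq_nonneg (p i - q j))).1 h5 j
          (Finset.mem_univ j)
      simp [h4]
  have hmpos : (0 : ℝ) < m := by
    have := i0.pos
    exact_mod_cast this
  have hr : ∀ i, 0 < ∑ j, C i j := fun i => by
    have := hpos (fun k => if k = i then 1 else 0) (fun _ => 0)
      (by simpa [ite_pow] using hmpos)
    simp only [sub_zero, ite_pow, one_pow] at this
    rw [Finset.sum_comm] at this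
    simpa using this
  have hs : ∀ j, 0 < ∑ i, C i j := fun j => by
    have := hpos (fun _ => 0) (fun k => if k = j then 1 else 0)
      (by simpa [ite_pow] using hmpos)
    simpa [ite_pow] using this
  have key := dual_nonneg a h C hr hs hnn
  rw [hCk] at key
  rw [map_smul, smul_eq_mul, inv_mul_lt_iff₀ ha] at h1
  linarith

lemma forward {m : ℕ} (hm : 1 ≤ m) (a : Fin m × Fin m → ℝ)
    (h : ∀ t : ℝ, 0 ≤ t → ∀ B : Matrix (Fin m) (Fin m) ℂ,
        matrixOpNorm (Matrix.of fun i j => (Real.exp (-t * a (i, j)) : ℂ) * B i j)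
          ≤ matrixOpNorm B) : Nonempty (SqDistInnerRepr a) := by
  have hnn : ∀ x, 0 ≤ a x := fun x => a_nonneg a h x.1 x.2
  rcases (Finset.sum_nonneg fun x _ => hnn x : 0 ≤ ∑ x, a x).lt_or_eq with hs | hs
  · obtain ⟨G, hG, he⟩ := mem_gramImage ⟨0, hm⟩ a h hs
    obtain ⟨v, hv⟩ := psd_gram hG.1
    refine ⟨⟨EuclideanSpace ℝ (Fin m ⊕ Fin m), fun i => Real.sqrt (∑ x, a x) • v (.inl i),
      fun j => Real.sqrt (∑ x, a x) • v (.inr j), fun i j => ?_⟩⟩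
    rw [← smul_sub, norm_smul, mul_pow, ← gramMap_eq hv (i, j), he, Real.norm_eq_abs, sq_abs,
      Real.sq_sqrt hs.le]
    simp only [Pi.smul_apply, smul_eq_mul]
    field_simp
  · refine ⟨⟨ℝ, fun _ => 0, fun _ => 0, fun i j => ?_⟩⟩
    have := (Finset.sum_eq_zero_iff_of_nonneg (fun x _ => hnn x)).1 hs.symm (i, j)
      (Finset.mem_univ _)
    simp [this]


theorem semigroup_contractive_schur_multipliers_iff_finite {m : ℕ} (hm : 1 ≤ m)
    (a : Fin m × Fin m → ℝ) :
    (∀ t : ℝ, 0 ≤ t → ∀ B : Matrix (Fin m) (Fin m) ℂ,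
        matrixOpNorm (Matrix.of fun i j => (Real.exp (-t * a (i, j)) : ℂ) * B i j)
          ≤ matrixOpNorm B)
      ↔ Nonempty (SqDistInnerRepr a) := by
  exact ⟨forward hm a, fun ⟨r⟩ t ht B => backward a r t ht B⟩
end
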